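/- Fix n ≥ 2. Let F ∈ ℤ[Y,X₁,…,Xₙ] with deg_Y F ≥ 2 be a polynomial that is (1,n)-allowable but not strongly (1,n)-allowable. Then there exists an integer e(n) ≥ 1 depending only on n, and a constant C depending on n and on F, such that N(F,B) ≤ C · B^{n−1} · (log(B+2))^{e(n)} for all real B ≥ 1. -/

import Mathlib

open Polynomial

noncomputable section

/-- The rational function field `ℚ(X₁,…,Xₙ)`. -/
abbrev RF (n : ℕ) := FractionRing (MvPolynomial (Fin n) ℚ)

/-- Base change a polynomial `F ∈ ℤ[Y,X₁,…,Xₙ]` (written as a polynomial in `Y`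
with coefficients in `ℤ[X₁,…,Xₙ]`) to `ℚ[Y,X₁,…,Xₙ]`. -/
def toQ {n : ℕ} (F : Polynomial (MvPolynomial (Fin n) ℤ)) :
    Polynomial (MvPolynomial (Fin n) ℚ) :=
  F.map (MvPolynomial.map (Int.castRingHom ℚ))

/-- View a polynomial in `ℚ[X][Y]` as a polynomial in `ℚ(X)[Y]`. -/
def toFracQ {n : ℕ} (F : Polynomial (MvPolynomial (Fin n) ℚ)) : Polynomial (RF n) :=
  F.map (algebraMap (MvPolynomial (Fin n) ℚ) (RF n))

/-- View a polynomial in `ℤ[X][Y]` as a polynomial in `ℚ(X)[Y]`. -/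
def toFrac {n : ℕ} (F : Polynomial (MvPolynomial (Fin n) ℤ)) : Polynomial (RF n) :=
  toFracQ (toQ F)

/-- The degree of `F(Y,X)` in the variable `Xᵢ`. -/
def degX {n : ℕ} {R : Type*} [CommSemiring R]
    (F : Polynomial (MvPolynomial (Fin n) R)) (i : Fin n) : ℕ :=
  F.support.sup fun k => (F.coeff k).degreeOf i

/-- The total degree of `F(Y,X₁,…,Xₙ)` as a polynomial in `n+1` variables. -/
def totalDeg {n : ℕ} {R : Type*} [CommSemiring R]
    (F : Polynomial (MvPolynomial (Fin n) R)) : ℕ :=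
  F.support.sup fun k => k + (F.coeff k).totalDegree

/-- `‖g‖`: the maximum absolute value of a coefficient of `g ∈ ℤ[X₁,…,Xₙ]`. -/
def mvNorm {n : ℕ} (g : MvPolynomial (Fin n) ℤ) : ℕ :=
  g.support.sup fun m => (g.coeff m).natAbs

/-- `‖F‖`: the maximum absolute value of a coefficient of `F ∈ ℤ[Y,X₁,…,Xₙ]`. -/
def polyNorm {n : ℕ} (F : Polynomial (MvPolynomial (Fin n) ℤ)) : ℕ :=
  F.support.sup fun k => mvNorm (F.coeff k)

/-- The counting function
`N(F,B) = #{x ∈ ℤⁿ ∩ [−B,B]ⁿ : ∃ y ∈ ℤ, F(y,x) = 0}`. -/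
def NFB {n : ℕ} (F : Polynomial (MvPolynomial (Fin n) ℤ)) (B : ℝ) : ℕ :=
  Set.ncard {x : Fin n → ℤ | (∀ i, |(x i : ℝ)| ≤ B) ∧
    ∃ y : ℤ, Polynomial.eval y (F.map (MvPolynomial.eval x)) = 0}

/-- `F ∈ ℤ[Y,X₁,…,Xₙ]` is absolutely irreducible: irreducible over `ℚ̄`. -/
def AbsIrred {n : ℕ} (F : Polynomial (MvPolynomial (Fin n) ℤ)) : Prop :=
  Irreducible (F.map (MvPolynomial.map (Int.castRingHom (AlgebraicClosure ℚ))))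

/-- `G` has positive degree in `Y` and in each variable `Xᵢ`. -/
def AllPosDeg {n : ℕ} (G : Polynomial (MvPolynomial (Fin n) ℤ)) : Prop :=
  0 < G.natDegree ∧ ∀ i : Fin n, 0 < degX G i

/-- A field extension `M` of `ℚ(X₁,…,Xₙ)` is an `n`-genuine extension: every
`G ∈ ℤ[Y,X₁,…,Xₙ]` irreducible over `ℚ(X)` with `M ≅ ℚ(X)[Y]/(G)` has positive
degree in each of `Y, X₁, …, Xₙ`. -/
def IsGenuineExt (n : ℕ) (M : Type*) [Field M] [Algebra (RF n) M] : Prop :=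
  ∀ G : Polynomial (MvPolynomial (Fin n) ℤ), Irreducible (toFrac G) →
    Nonempty (AdjoinRoot (toFrac G) ≃ₐ[RF n] M) → AllPosDeg G

/-- A field extension `M` of `ℚ(X₁,…,Xₙ)` is strongly `n`-genuine: every
intermediate field strictly containing `ℚ(X)` is `n`-genuine. -/
def IsStronglyGenuineExt (n : ℕ) (M : Type*) [Field M] [Algebra (RF n) M] : Prop :=
  ∀ M' : IntermediateField (RF n) M, M' ≠ ⊥ → IsGenuineExt n M'

/-- The extension `ℚ(X)[Y]/(Fq)` presented by `Fq ∈ ℚ[X][Y]` is `n`-genuine. -/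
def GenuineExtOfQ {n : ℕ} (Fq : Polynomial (MvPolynomial (Fin n) ℚ)) : Prop :=
  ∀ G : Polynomial (MvPolynomial (Fin n) ℤ), Irreducible (toFrac G) →
    Nonempty (AdjoinRoot (toFrac G) ≃ₐ[RF n] AdjoinRoot (toFracQ Fq)) → AllPosDeg G

/-- The extension `ℚ(X)[Y]/(Fq)` presented by `Fq ∈ ℚ[X][Y]` is strongly
`n`-genuine: for any field `M` isomorphic over `ℚ(X)` to `ℚ(X)[Y]/(Fq)`, every
intermediate field strictly containing `ℚ(X)` is `n`-genuine. -/
def StronglyGenuineExtOfQ {n : ℕ} (Fq : Polynomial (MvPolynomial (Fin n) ℚ)) : Prop :=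
  ∀ (M : Type) [Field M] [Algebra (RF n) M],
    Nonempty (AdjoinRoot (toFracQ Fq) ≃ₐ[RF n] M) → IsStronglyGenuineExt n M

/-- An absolutely irreducible `F ∈ ℤ[Y,X₁,…,Xₙ]` is an `n`-genuine polynomial. -/
def IsGenuinePoly {n : ℕ} (F : Polynomial (MvPolynomial (Fin n) ℤ)) : Prop :=
  AbsIrred F ∧ GenuineExtOfQ (toQ F)

/-- An absolutely irreducible `F ∈ ℤ[Y,X₁,…,Xₙ]` is a strongly `n`-genuine polynomial. -/
def IsStronglyGenuinePoly {n : ℕ} (F : Polynomial (MvPolynomial (Fin n) ℤ)) : Prop :=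
  AbsIrred F ∧ StronglyGenuineExtOfQ (toQ F)

/-- The ring map `ℚ[X₁,…,Xₙ] → ℚ[X₁,…,Xₙ]` induced by the linear substitution
`Xᵢ ↦ Σⱼ σᵢⱼ Xⱼ`. -/
def lsubMv {n : ℕ} (σ : Matrix (Fin n) (Fin n) ℚ) :
    MvPolynomial (Fin n) ℚ →+* MvPolynomial (Fin n) ℚ :=
  (MvPolynomial.aeval (R := ℚ)
    fun i => ∑ j, MvPolynomial.C (σ i j) * MvPolynomial.X j).toRingHom

/-- `F_σ(Y,X) := F(Y,σ(X))` for a linear change of variables `σ`. -/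
def applyGL {n : ℕ} (σ : Matrix (Fin n) (Fin n) ℚ)
    (Fq : Polynomial (MvPolynomial (Fin n) ℚ)) : Polynomial (MvPolynomial (Fin n) ℚ) :=
  Fq.map (lsubMv σ)

/-- `F` is `(1,n)`-allowable: absolutely irreducible, monic in `Y`, and
`ℚ(X)[Y]/(F_σ)` is an `n`-genuine extension for every `σ ∈ GLₙ(ℚ)`. -/
def IsAllowable {n : ℕ} (F : Polynomial (MvPolynomial (Fin n) ℤ)) : Prop :=
  AbsIrred F ∧ F.Monic ∧
    ∀ σ : Matrix (Fin n) (Fin n) ℚ, IsUnit σ.det → GenuineExtOfQ (applyGL σ (toQ F))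

/-- `F` is strongly `(1,n)`-allowable: absolutely irreducible, monic in `Y`, and
`ℚ(X)[Y]/(F_σ)` is a strongly `n`-genuine extension for every `σ ∈ GLₙ(ℚ)`. -/
def IsStronglyAllowable {n : ℕ} (F : Polynomial (MvPolynomial (Fin n) ℤ)) : Prop :=
  AbsIrred F ∧ F.Monic ∧
    ∀ σ : Matrix (Fin n) (Fin n) ℚ, IsUnit σ.det → StronglyGenuineExtOfQ (applyGL σ (toQ F))

/-- `F` has the form (1.2) with parameter `m`:
`F = Y^{md} + f₁(X) Y^{m(d-1)} + ⋯ + f_{d-1}(X) Y^m + f_d(X)` with `f_d ≠ 0`. -/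
def HasForm (n m : ℕ) (F : Polynomial (MvPolynomial (Fin n) ℤ)) : Prop :=
  ∃ (d : ℕ) (f : ℕ → MvPolynomial (Fin n) ℤ), 1 ≤ d ∧ f d ≠ 0 ∧
    F = Polynomial.X ^ (m * d) +
      ∑ j ∈ Finset.Icc 1 d, Polynomial.C (f j) * Polynomial.X ^ (m * (d - j))

/-- `P` has a linear factor in `Y`: `P = (Y − Q(X))·H̃(Y,X)`. -/
def HasLinearFactorY {n : ℕ} {R : Type*} [CommRing R]
    (P : Polynomial (MvPolynomial (Fin n) R)) : Prop :=
  ∃ (Q : MvPolynomial (Fin n) R) (H : Polynomial (MvPolynomial (Fin n) R)),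
    P = (Polynomial.X - Polynomial.C Q) * H

/-- The canonical map `ℚ[X₁,…,Xₙ] → ℚ(X)[Y]/(F)`. -/
def structMap {n : ℕ} (F : Polynomial (MvPolynomial (Fin n) ℤ)) :
    MvPolynomial (Fin n) ℚ →+* AdjoinRoot (toFrac F) :=
  (algebraMap (RF n) (AdjoinRoot (toFrac F))).comp
    (algebraMap (MvPolynomial (Fin n) ℚ) (RF n))

/-- `z ∈ ℚ(X)[Y]/(F)` lies in the subfield `ℚ((Xᵢ)_{i≠j})`: it can be written
as a quotient of two polynomials not involving `Xⱼ`. -/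
def CoordMem {n : ℕ} (j : Fin n) (F : Polynomial (MvPolynomial (Fin n) ℤ))
    (z : AdjoinRoot (toFrac F)) : Prop :=
  ∃ a b : MvPolynomial (Fin n) ℚ,
    MvPolynomial.degreeOf j a = 0 ∧ MvPolynomial.degreeOf j b = 0 ∧
    structMap F b ≠ 0 ∧ z * structMap F b = structMap F a

/-- `z ∈ ℚ(X)[Y]/(F)` is algebraic over the subfield `ℚ((Xᵢ)_{i≠j})`. -/
def AlgOverCoord {n : ℕ} (j : Fin n) (F : Polynomial (MvPolynomial (Fin n) ℤ))
    (z : AdjoinRoot (toFrac F)) : Prop :=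
  ∃ P : Polynomial (AdjoinRoot (toFrac F)), P ≠ 0 ∧ (∀ k, CoordMem j F (P.coeff k)) ∧
    Polynomial.eval z P = 0

/-- Substitute `Xᵢ = xᵢ` for `i ∈ I` into `F`, over `ℚ̄`. -/
def substSome {n : ℕ} (I : Finset (Fin n)) (x : Fin n → ℚ)
    (F : Polynomial (MvPolynomial (Fin n) ℤ)) :
    Polynomial (MvPolynomial (Fin n) (AlgebraicClosure ℚ)) :=
  (toQ F).map
    ((MvPolynomial.aeval (R := ℚ) fun i =>
      if i ∈ I then MvPolynomial.C (algebraMap ℚ (AlgebraicClosure ℚ) (x i))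
      else MvPolynomial.X i).toRingHom)

/-- Substitute `Xᵢ = xᵢ` for all `i ≠ i₀` into `F`, over `ℚ̄`. -/
def substKeepFirst {n : ℕ} (i0 : Fin n) (x : {i : Fin n // i ≠ i0} → ℤ)
    (F : Polynomial (MvPolynomial (Fin n) ℤ)) :
    Polynomial (MvPolynomial (Fin n) (AlgebraicClosure ℚ)) :=
  F.map
    ((MvPolynomial.aeval (R := ℤ) fun i =>
      if h : i = i0 then (MvPolynomial.X i : MvPolynomial (Fin n) (AlgebraicClosure ℚ))
      else MvPolynomial.C ((x ⟨i, h⟩ : ℤ) : AlgebraicClosure ℚ)).toRingHom)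

/-- `‖L‖`: maximum absolute value of an entry of an integer matrix. -/
def matNorm {n : ℕ} (L : Matrix (Fin n) (Fin n) ℤ) : ℕ :=
  Finset.univ.sup fun p : Fin n × Fin n => (L p.1 p.2).natAbs

/-- The standard additive character `e_p(a) = exp(2πi a/p)` on `ZMod p`. -/
def eZp (p : ℕ) (a : ZMod p) : ℂ :=
  Complex.exp (2 * Real.pi * Complex.I * (a.val : ℂ) / (p : ℂ))

open scoped IntermediateField

lemma hensel_poly (f : ℤ[X][X]) (p : ℕ) (hp : p.Prime) (t0 y0 : ℤ)
    (h : ¬ (p : ℤ) ∣ ((derivative f).map (evalRingHom t0)).eval y0) (M : ℕ) :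
    ∃ g : ℤ[X], ∀ t y : ℤ, (p : ℤ) ∣ t - t0 → (p : ℤ) ∣ y - y0 →
      (f.map (evalRingHom t)).eval y = 0 → (p : ℤ) ^ (M + 1) ∣ y - g.eval t := by
  have hpp : Prime (p : ℤ) := Nat.prime_iff_prime_int.mp hp
  -- inverse
  obtain ⟨a, ha⟩ : ∃ a : ℤ, (p : ℤ) ∣ 1 - a * ((derivative f).map (evalRingHom t0)).eval y0 := by
    have hc : IsCoprime (p : ℤ) (((derivative f).map (evalRingHom t0)).eval y0) :=
      (Prime.coprime_iff_not_dvd hpp).2 h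
    obtain ⟨u, v, huv⟩ := hc
    exact ⟨v, u, by linear_combination -huv⟩
  induction M with
  | zero =>
    refine ⟨C y0, fun t y _ hy _ => by simpa using hy⟩
  | succ M ih =>
    obtain ⟨g, hg⟩ := ih
    refine ⟨g - C a * f.eval g, fun t y ht hy hf => ?_⟩
    have h1 := hg t y ht hy hf
    set w := y - g.eval t with hw
    have h2 : eval t (f.eval g) = (f.map (evalRingHom t)).eval (g.eval t) := by
      rw [← coe_evalRingHom t, ← Polynomial.eval_map_apply]
    obtain ⟨k, hk⟩ := Polynomial.binomExpansion (f.map (evalRingHom t)) y (-w)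
    have hyw : y + -w = g.eval t := by rw [hw]; ring
    rw [hyw, hf, Polynomial.derivative_map] at hk
    have h3 : y - (g - C a * f.eval g).eval t
        = w * (1 - a * ((derivative f).map (evalRingHom t)).eval y + a * k * w) := by
      simp only [eval_sub, eval_mul, eval_C]
      rw [h2, hk, hw]; ring
    rw [h3, pow_succ]
    apply mul_dvd_mul h1
    have hpw : (p : ℤ) ∣ w := (dvd_pow_self _ (Nat.succ_ne_zero M)).trans h1
    have h4 : (p : ℤ) ∣ ((derivative f).map (evalRingHom t)).eval y
        - ((derivative f).map (evalRingHom t0)).eval y0 := by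
      have e1 : (p : ℤ) ∣ ((derivative f).map (evalRingHom t)).eval y
        - ((derivative f).map (evalRingHom t)).eval y0 :=
        hy.trans (Polynomial.sub_dvd_eval_sub y y0 _)
      have e2 : (p : ℤ) ∣ ((derivative f).map (evalRingHom t)).eval y0
        - ((derivative f).map (evalRingHom t0)).eval y0 := by
        have : ∀ s : ℤ, ((derivative f).map (evalRingHom s)).eval y0
            = ((derivative f).eval (C y0)).eval s := by
          intro s
          have := Polynomial.eval_map_apply (f := evalRingHom s) (p := derivative f) (C y0)
          simpa using this
        rw [this, this]
        exact ht.trans (Polynomial.sub_dvd_eval_sub t t0 _)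
      have := dvd_add e1 e2
      simpa using this
    have h5 : 1 - a * ((derivative f).map (evalRingHom t)).eval y + a * k * w
      = (1 - a * ((derivative f).map (evalRingHom t0)).eval y0)
        - a * (((derivative f).map (evalRingHom t)).eval y
        - ((derivative f).map (evalRingHom t0)).eval y0) + a * k * w := by ring
    rw [h5]
    exact dvd_add (dvd_sub ha (h4.mul_left _)) (hpw.mul_left _)

lemma taylor_dvd (W : ℤ[X]) (p M : ℕ) (t t0 : ℤ) (ht : (p : ℤ) ∣ t - t0)
    (h : ∀ l < M, (p : ℤ) ^ (M - l) ∣ (taylor t0 W).coeff l) : (p : ℤ) ^ M ∣ W.eval t := by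
  have h1 : W.eval t = (taylor t0 W).eval (t - t0) := by
    rw [taylor_eval]; congr 1; ring
  rw [h1, eval_eq_sum]
  apply Finset.dvd_sum
  intro l _
  by_cases hl : l < M
  · have := mul_dvd_mul (h l hl) (pow_dvd_pow_of_dvd ht l)
    rwa [← pow_add, Nat.sub_add_cancel hl.le] at this
  · exact Dvd.dvd.mul_left ((pow_dvd_pow _ (not_lt.1 hl)).trans (pow_dvd_pow_of_dvd ht l)) _

def mkP {A : ℕ} (u : Fin A → ℤ) : ℤ[X] := ∑ a : Fin A, C (u a) * X ^ (a : ℕ)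

lemma mkP_coeff {A : ℕ} (u : Fin A → ℤ) (a : Fin A) : (mkP u).coeff a = u a := by
  simp [mkP, coeff_X_pow, Fin.val_inj]

lemma mkP_natDegree {A : ℕ} (hA : 1 ≤ A) (u : Fin A → ℤ) : (mkP u).natDegree < A := by
  have : (mkP u).natDegree ≤ A - 1 := by
    apply natDegree_sum_le_of_forall_le
    intro a _
    exact (natDegree_C_mul_X_pow_le _ _).trans (by have := a.2; omega)
  omega

lemma mkP_eval_bound {A : ℕ} (u : Fin A → ℤ) (B H : ℤ) (t : ℤ) (ht : |t| ≤ B)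
    (hu : ∀ a : Fin A, |u a| * B ^ (a : ℕ) ≤ H) : |(mkP u).eval t| ≤ A * H := by
  have h0 : (mkP u).eval t = ∑ a : Fin A, u a * t ^ (a : ℕ) := by
    simp [mkP, eval_finsetSum]
  rw [h0]
  refine (Finset.abs_sum_le_sum_abs _ _).trans ?_
  calc _ ≤ ∑ a : Fin A, H := by
        apply Finset.sum_le_sum
        intro a _
        rw [abs_mul, abs_pow]
        refine le_trans ?_ (hu a)
        gcongr
    _ = _ := by simp

lemma mkP_sub {A : ℕ} (u v : Fin A → ℤ) : mkP (u - v) = mkP u - mkP v := by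
  simp [mkP, sub_mul, Finset.sum_sub_distrib]

lemma count_ineq (p A B B1 : ℕ) (hp : p.Prime) (hA : 1 ≤ A)
    (hB : 1 ≤ B) (hB1 : 1 ≤ B1) (hpB : 4 * B ≤ p ^ 2) (hA2 : 4 * A ^ 2 * B1 ≤ 4 ^ (A - 1)) :
    ∏ l : Fin (2 * A), p ^ (2 * A - (l : ℕ)) <
      (∏ a : Fin A, ((p ^ (2 * A) - 1) / (2 * A) / B ^ (a : ℕ) + 1)) *
      ∏ a : Fin A, ((p ^ (2 * A) - 1) / (2 * A) / (B ^ (a : ℕ) * B1) + 1) := by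
  set H := (p ^ (2 * A) - 1) / (2 * A) with hH
  have hH1 : p ^ (2 * A) ≤ 2 * A * (H + 1) := by
    have h1 : p ^ (2 * A) - 1 < 2 * A * (H + 1) := by
      rw [hH]; exact Nat.lt_mul_div_succ _ (by omega)
    omega
  have hfl : ∀ x : ℕ, 1 ≤ x → p ^ (2 * A) ≤ (H / x + 1) * (x * (2 * A)) := by
    intro x hx
    have h1 : H < x * (H / x + 1) := Nat.lt_mul_div_succ _ (by omega)
    calc p ^ (2 * A) ≤ 2 * A * (H + 1) := hH1
      _ ≤ 2 * A * (x * (H / x + 1)) := by gcongr; omega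
      _ = _ := by ring
  have hl : ∏ l : Fin (2 * A), p ^ (2 * A - (l : ℕ)) = p ^ (A * (2 * A + 1)) := by
    rw [Finset.prod_pow_eq_pow_sum]
    congr 1
    rw [Fin.sum_univ_eq_sum_range (fun l => 2 * A - l)]
    have key : ∀ N : ℕ, 2 * ∑ l ∈ Finset.range N, (N - l) = N * (N + 1) := by
      intro N
      induction N with
      | zero => simp
      | succ N ih =>
        rw [Finset.sum_range_succ']
        simp only [Nat.add_sub_add_right, Nat.sub_zero, mul_add, ih]
        ring
    have := key (2 * A)
    have h2 : 2 * A * (2 * A + 1) = 2 * (A * (2 * A + 1)) := by ring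
    omega
  rw [hl]
  set Y1 := ∏ a : Fin A, (H / B ^ (a : ℕ) + 1)
  set Y2 := ∏ a : Fin A, (H / (B ^ (a : ℕ) * B1) + 1)
  set D := (∏ a : Fin A, (B ^ (a : ℕ) * (2 * A))) * ∏ a : Fin A, (B ^ (a : ℕ) * B1 * (2 * A)) with hD
  have hYD : p ^ (4 * A * A) ≤ (Y1 * Y2) * D := by
    have e1 : (Y1 * Y2) * D = (∏ a : Fin A, ((H / B ^ (a : ℕ) + 1) * (B ^ (a : ℕ) * (2 * A)))) *
        ∏ a : Fin A, ((H / (B ^ (a : ℕ) * B1) + 1) * (B ^ (a : ℕ) * B1 * (2 * A))) := by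
      simp only [hD, Y1, Y2, ← Finset.prod_mul_distrib]
      exact Finset.prod_congr rfl fun a _ => by ring
    rw [e1]
    have e2 : p ^ (4 * A * A) = (∏ _a : Fin A, p ^ (2 * A)) * ∏ _a : Fin A, p ^ (2 * A) := by
      simp only [Finset.prod_const, Finset.card_univ, Fintype.card_fin]
      rw [← pow_mul, ← pow_add]; congr 1; ring
    rw [e2]
    apply Nat.mul_le_mul
    · exact Finset.prod_le_prod' fun a _ => hfl _ (Nat.one_le_pow _ _ hB)
    · exact Finset.prod_le_prod' fun a _ => hfl _ (Nat.mul_pos (Nat.one_le_pow _ _ hB) hB1)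
  have hDb : D ≤ p ^ (2 * (A - 1) * A) := by
    have e1 : D = B ^ (A * (A - 1)) * (4 * A ^ 2 * B1) ^ A := by
      rw [hD, ← Finset.prod_mul_distrib]
      have : ∀ a : Fin A, B ^ (a : ℕ) * (2 * A) * (B ^ (a : ℕ) * B1 * (2 * A))
          = B ^ ((a : ℕ) * 2) * (4 * A ^ 2 * B1) := by intro a; rw [pow_mul]; ring
      simp only [this]
      rw [Finset.prod_mul_distrib, Finset.prod_pow_eq_pow_sum,
        Fin.sum_univ_eq_sum_range (fun a => a * 2), ← Finset.sum_mul, Finset.sum_range_id_mul_two]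
      simp
    rw [e1]
    calc B ^ (A * (A - 1)) * (4 * A ^ 2 * B1) ^ A ≤ B ^ (A * (A - 1)) * (4 ^ (A - 1)) ^ A := by gcongr
      _ = (4 * B) ^ ((A - 1) * A) := by rw [mul_pow, ← pow_mul, mul_comm A]; ring
      _ ≤ (p ^ 2) ^ ((A - 1) * A) := by gcongr
      _ = _ := by rw [← pow_mul]; congr 1; ring
  have hDpos : 0 < D := by
    rw [hD]; positivity
  by_contra hcon
  push Not at hcon
  have h1 : p ^ (4 * A * A) ≤ p ^ (A * (2 * A + 1)) * p ^ (2 * (A - 1) * A) :=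
    hYD.trans (Nat.mul_le_mul hcon hDb)
  rw [← pow_add] at h1
  have h2 := (Nat.pow_le_pow_iff_right hp.one_lt).1 h1
  obtain ⟨A', rfl⟩ : ∃ A', A = A' + 1 := ⟨A - 1, by omega⟩
  simp only [Nat.add_sub_cancel] at h2
  nlinarith

lemma pigeon (p A B B1 : ℕ) (hp : p.Prime) (hA : 1 ≤ A)
    (hB : 1 ≤ B) (hB1 : 1 ≤ B1) (hpB : 4 * B ≤ p ^ 2) (hA2 : 4 * A ^ 2 * B1 ≤ 4 ^ (A - 1))
    (g : ℤ[X]) (t0 : ℤ) :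
    ∃ P Q : ℤ[X], (P ≠ 0 ∨ Q ≠ 0) ∧ P.natDegree < A ∧ Q.natDegree < A ∧
      ∀ t y : ℤ, |t| ≤ B → |y| ≤ B1 → (p : ℤ) ∣ t - t0 → (p : ℤ) ^ (2 * A) ∣ y - g.eval t →
        P.eval t + Q.eval t * y = 0 := by
  set H := (p ^ (2 * A) - 1) / (2 * A) with hH
  have hHlt : 2 * A * H < p ^ (2 * A) := by
    have : 2 * A * H ≤ p ^ (2 * A) - 1 := Nat.mul_div_le _ _
    have h2 : 0 < p ^ (2 * A) := pow_pos hp.pos _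
    omega
  let α := (Π a : Fin A, Fin (H / B ^ (a : ℕ) + 1)) × (Π a : Fin A, Fin (H / (B ^ (a : ℕ) * B1) + 1))
  let β := Π l : Fin (2 * A), ZMod (p ^ (2 * A - (l : ℕ)))
  have : ∀ l : Fin (2 * A), NeZero (p ^ (2 * A - (l : ℕ))) := fun l => ⟨(pow_pos hp.pos _).ne'⟩
  let U : α → (Fin A → ℤ) := fun x a => ((x.1 a : ℕ) : ℤ)
  let V : α → (Fin A → ℤ) := fun x a => ((x.2 a : ℕ) : ℤ)
  let Φ : α → β := fun x l => (((taylor t0 (mkP (U x) + mkP (V x) * g)).coeff l : ℤ) : ZMod _)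
  have hcard : Fintype.card β < Fintype.card α := by
    have := count_ineq p A B B1 hp hA hB hB1 hpB hA2
    simpa [α, β, Fintype.card_pi, ZMod.card] using this
  obtain ⟨x, x', hne, hΦ⟩ := Fintype.exists_ne_map_eq_of_card_lt Φ hcard
  refine ⟨mkP (U x - U x'), mkP (V x - V x'), ?_, mkP_natDegree hA _, mkP_natDegree hA _, ?_⟩
  · by_contra hcon
    push Not at hcon
    apply hne
    apply Prod.ext
    · funext a
      have := congrArg (fun P => P.coeff (a : ℕ)) hcon.1
      simp only [mkP_coeff, coeff_zero, Pi.sub_apply, U] at this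
      apply Fin.ext; omega
    · funext a
      have := congrArg (fun P => P.coeff (a : ℕ)) hcon.2
      simp only [mkP_coeff, coeff_zero, Pi.sub_apply, V] at this
      apply Fin.ext; omega
  · intro t y ht hy htp hyp
    set P := mkP (U x - U x') with hP
    set Q := mkP (V x - V x') with hQ
    have hW : (p : ℤ) ^ (2 * A) ∣ (P + Q * g).eval t := by
      apply taylor_dvd _ _ _ _ t0 htp
      intro l hl
      have h1 := congrFun hΦ ⟨l, hl⟩
      simp only [Φ] at h1
      rw [ZMod.intCast_eq_intCast_iff_dvd_sub] at h1
      have h2 : (taylor t0 (P + Q * g)).coeff l = -((taylor t0 (mkP (U x') + mkP (V x') * g)).coeff l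
          - (taylor t0 (mkP (U x) + mkP (V x) * g)).coeff l) := by
        rw [hP, hQ, mkP_sub, mkP_sub, ← coeff_sub, ← coeff_neg, ← map_sub, ← map_neg]
        congr 2; ring
      rw [h2, dvd_neg]
      simpa using h1
    have hW2 : (p : ℤ) ^ (2 * A) ∣ P.eval t + Q.eval t * y := by
      have : P.eval t + Q.eval t * y = (P + Q * g).eval t + Q.eval t * (y - g.eval t) := by
        simp only [eval_add, eval_mul]; ring
      rw [this]
      exact dvd_add hW (hyp.mul_left _)
    apply Int.eq_zero_of_abs_lt_dvd hW2
    have hPb : |P.eval t| ≤ A * (H : ℤ) := by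
      apply mkP_eval_bound _ (B : ℤ) _ _ ht
      intro a
      have h1 : |(U x - U x') a| ≤ ((H / B ^ (a : ℕ) : ℕ) : ℤ) := by
        have := (x.1 a).2; have := (x'.1 a).2
        simp only [Pi.sub_apply, U]
        rw [abs_le]; constructor <;> omega
      have h2 : H / B ^ (a : ℕ) * B ^ (a : ℕ) ≤ H := Nat.div_mul_le_self _ _
      calc _ ≤ ((H / B ^ (a : ℕ) : ℕ) : ℤ) * (B : ℤ) ^ (a : ℕ) := by gcongr
        _ ≤ _ := by exact_mod_cast h2
    have hQb : |(Q).eval t * B1| ≤ A * (H : ℤ) := by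
      rw [abs_mul, Nat.abs_cast]
      have h1 : ∀ a : Fin A, |(V x - V x') a| ≤ ((H / (B ^ (a : ℕ) * B1) : ℕ) : ℤ) := by
        intro a
        have := (x.2 a).2; have := (x'.2 a).2
        simp only [Pi.sub_apply, V]
        rw [abs_le]; constructor <;> omega
      have h3 : |Q.eval t| ≤ A * ((H / B1 : ℕ) : ℤ) := by
        apply mkP_eval_bound _ (B : ℤ) _ _ ht
        intro a
        have h2 : H / (B ^ (a : ℕ) * B1) * B ^ (a : ℕ) ≤ H / B1 := by
          rw [mul_comm (B ^ (a : ℕ)) B1, ← Nat.div_div_eq_div_mul]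
          exact Nat.div_mul_le_self _ _
        calc _ ≤ ((H / (B ^ (a : ℕ) * B1) : ℕ) : ℤ) * (B : ℤ) ^ (a : ℕ) := by gcongr; exact h1 a
          _ ≤ _ := by exact_mod_cast h2
      have h4 : H / B1 * B1 ≤ H := Nat.div_mul_le_self _ _
      calc _ ≤ A * ((H / B1 : ℕ) : ℤ) * B1 := by gcongr
        _ = A * ((H / B1 * B1 : ℕ) : ℤ) := by push_cast; ring
        _ ≤ _ := by gcongr
    have hQy : |Q.eval t * y| ≤ A * (H : ℤ) := by
      rw [abs_mul] at hQb ⊢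
      rw [Nat.abs_cast] at hQb
      exact le_trans (by gcongr) hQb
    calc _ ≤ |P.eval t| + |Q.eval t * y| := abs_add_le _ _
      _ ≤ A * (H : ℤ) + A * H := add_le_add hPb hQy
      _ = ((2 * A * H : ℕ) : ℤ) := by push_cast; ring
      _ < _ := by exact_mod_cast hHlt

/-- `Q^D f(-P/Q)`. -/
def homSub (f : ℤ[X][X]) (P Q : ℤ[X]) : ℤ[X] :=
  ∑ j ∈ Finset.range (f.natDegree + 1), f.coeff j * (-P) ^ j * Q ^ (f.natDegree - j)

lemma homSub_eval (f : ℤ[X][X]) (P Q : ℤ[X]) (t y : ℤ) (h : P.eval t + Q.eval t * y = 0)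
    (hf : (f.map (evalRingHom t)).eval y = 0) : (homSub f P Q).eval t = 0 := by
  have h1 : (homSub f P Q).eval t = (Q.eval t) ^ f.natDegree * (f.map (evalRingHom t)).eval y := by
    rw [homSub, eval_finsetSum, eval_map, eval₂_eq_sum_range, Finset.mul_sum]
    apply Finset.sum_congr rfl
    intro j hj
    have hj' : j ≤ f.natDegree := by simpa [Nat.lt_succ_iff] using hj
    have h2 : -P.eval t = Q.eval t * y := by linarith
    simp only [eval_mul, eval_pow, eval_neg, h2, coe_evalRingHom]
    rw [← Nat.sub_add_cancel hj', pow_add, mul_pow]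
    simp only [Nat.add_sub_cancel]
    ring
  rw [h1, hf, mul_zero]

lemma homSub_natDegree (f : ℤ[X][X]) (P Q : ℤ[X]) (k A : ℕ) (hk : ∀ j, (f.coeff j).natDegree ≤ k)
    (hP : P.natDegree ≤ A) (hQ : Q.natDegree ≤ A) :
    (homSub f P Q).natDegree ≤ k + A * f.natDegree := by
  apply natDegree_sum_le_of_forall_le
  intro j hj
  have hj' : j ≤ f.natDegree := by simpa [Nat.lt_succ_iff] using hj
  have h1 : ((-P) ^ j).natDegree ≤ j * A :=
    natDegree_pow_le_of_le j (by rwa [natDegree_neg])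
  have h2 : (Q ^ (f.natDegree - j)).natDegree ≤ (f.natDegree - j) * A :=
    natDegree_pow_le_of_le _ hQ
  calc _ ≤ k + j * A + (f.natDegree - j) * A :=
        natDegree_mul_le_of_le (natDegree_mul_le_of_le (hk j) h1) h2
    _ = _ := by
      obtain ⟨d, hd⟩ := Nat.exists_eq_add_of_le hj'
      rw [hd, Nat.add_sub_cancel_left]; ring

lemma class_count (f : ℤ[X][X]) (k p A B B1 : ℕ) (hp : p.Prime) (hA : 1 ≤ A)
    (hB : 1 ≤ B) (hB1 : 1 ≤ B1) (hpB : 4 * B ≤ p ^ 2) (hA2 : 4 * A ^ 2 * B1 ≤ 4 ^ (A - 1))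
    (hk : ∀ j, (f.coeff j).natDegree ≤ k)
    (hno : ∀ P Q : ℤ[X], Q ≠ 0 → homSub f P Q ≠ 0)
    (t0 y0 : ℤ) (h0 : ¬ (p : ℤ) ∣ ((derivative f).map (evalRingHom t0)).eval y0)
    (S : Finset (ℤ × ℤ)) (hS : ∀ z ∈ S, |z.1| ≤ B ∧ |z.2| ≤ B1 ∧ (p : ℤ) ∣ z.1 - t0 ∧
      (p : ℤ) ∣ z.2 - y0 ∧ (f.map (evalRingHom z.1)).eval z.2 = 0) :
    (S.image Prod.fst).card ≤ k + A * f.natDegree + A := by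
  obtain ⟨g, hg⟩ := hensel_poly f p hp t0 y0 h0 (2 * A)
  obtain ⟨P, Q, hPQ, hP, hQ, hall⟩ := pigeon p A B B1 hp hA hB hB1 hpB hA2 g t0
  have hz : ∀ z ∈ S, P.eval z.1 + Q.eval z.1 * z.2 = 0 := by
    intro z hz
    obtain ⟨h1, h2, h3, h4, h5⟩ := hS z hz
    exact hall _ _ h1 h2 h3 ((pow_dvd_pow _ (Nat.le_succ _)).trans (hg _ _ h3 h4 h5))
  by_cases hQ0 : Q = 0
  · have hP0 : P ≠ 0 := by tauto
    have : S.image Prod.fst ⊆ P.roots.toFinset := by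
      intro t ht
      obtain ⟨z, hzS, rfl⟩ := Finset.mem_image.1 ht
      have := hz z hzS
      simp [hP0, IsRoot, hQ0] at this ⊢
      exact this
    have := (Finset.card_le_card this).trans (Multiset.toFinset_card_le _)
    have := P.card_roots'
    omega
  · have hR := hno P Q hQ0
    have : S.image Prod.fst ⊆ (homSub f P Q).roots.toFinset := by
      intro t ht
      obtain ⟨z, hzS, rfl⟩ := Finset.mem_image.1 ht
      have := homSub_eval f P Q z.1 z.2 (hz z hzS) (hS z hzS).2.2.2.2
      simpa [hR, IsRoot] using this
    have h1 := (Finset.card_le_card this).trans (Multiset.toFinset_card_le _)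
    have h2 := (homSub f P Q).card_roots'
    have h3 := homSub_natDegree f P Q k A hk hP.le hQ.le
    omega

lemma eval_mod (f : ℤ[X][X]) (p : ℕ) (t y : ℤ) :
    (((f.map (mapRingHom (Int.castRingHom (ZMod p)))).map (evalRingHom (t : ZMod p))).eval (y : ZMod p))
      = (((f.map (evalRingHom t)).eval y : ℤ) : ZMod p) := by
  have h1 : ((evalRingHom (t : ZMod p)).comp (mapRingHom (Int.castRingHom (ZMod p))))
      = (Int.castRingHom (ZMod p)).comp (evalRingHom t) := by
    ext <;> simp
  rw [map_map, h1, ← map_map]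
  have := Polynomial.eval_map_apply (f := Int.castRingHom (ZMod p)) (p := f.map (evalRingHom t)) y
  simp

lemma prime_count (f : ℤ[X][X]) (hf : f.Monic) (k p A B B1 : ℕ) (hp : p.Prime) (hA : 1 ≤ A)
    (hB : 1 ≤ B) (hB1 : 1 ≤ B1) (hpB : 4 * B ≤ p ^ 2) (hA2 : 4 * A ^ 2 * B1 ≤ 4 ^ (A - 1))
    (hk : ∀ j, (f.coeff j).natDegree ≤ k)
    (hno : ∀ P Q : ℤ[X], Q ≠ 0 → homSub f P Q ≠ 0)
    (S : Finset (ℤ × ℤ)) (hS : ∀ z ∈ S, |z.1| ≤ B ∧ |z.2| ≤ B1 ∧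
      (f.map (evalRingHom z.1)).eval z.2 = 0 ∧
      ¬ (p : ℤ) ∣ ((derivative f).map (evalRingHom z.1)).eval z.2) :
    (S.image Prod.fst).card ≤ p * f.natDegree * (k + A * f.natDegree + A) := by
  classical
  have : Fact p.Prime := ⟨hp⟩
  let c : ℤ × ℤ → ZMod p × ZMod p := fun z => (z.1, z.2)
  let T := S.image c
  have h1 : S.image Prod.fst ⊆ T.biUnion fun w => (S.filter fun z => c z = w).image Prod.fst := by
    intro t ht
    obtain ⟨z, hzS, rfl⟩ := Finset.mem_image.1 ht
    refine Finset.mem_biUnion.2 ⟨c z, Finset.mem_image_of_mem _ hzS, ?_⟩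
    exact Finset.mem_image_of_mem _ (Finset.mem_filter.2 ⟨hzS, rfl⟩)
  have h2 : (T.biUnion fun w => (S.filter fun z => c z = w).image Prod.fst).card
      ≤ T.card * (k + A * f.natDegree + A) := by
    apply Finset.card_biUnion_le_card_mul
    intro w hw
    obtain ⟨z0, hz0, rfl⟩ := Finset.mem_image.1 hw
    apply class_count f k p A B B1 hp hA hB hB1 hpB hA2 hk hno z0.1 z0.2 (hS z0 hz0).2.2.2
    intro z hz
    obtain ⟨hzS, hzc⟩ := Finset.mem_filter.1 hz
    have e1 : (z.1 : ZMod p) = z0.1 := congrArg Prod.fst hzc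
    have e2 : (z.2 : ZMod p) = z0.2 := congrArg Prod.snd hzc
    exact ⟨(hS z hzS).1, (hS z hzS).2.1, (ZMod.intCast_eq_intCast_iff_dvd_sub _ _ _).1 e1.symm,
      (ZMod.intCast_eq_intCast_iff_dvd_sub _ _ _).1 e2.symm, (hS z hzS).2.2.1⟩
  have h3 : T.card ≤ p * f.natDegree := by
    let fb : ZMod p → (ZMod p)[X] := fun t =>
      (f.map (mapRingHom (Int.castRingHom (ZMod p)))).map (evalRingHom t)
    have hfb : ∀ t, (fb t).Monic := fun t => (hf.map _).map _
    have hfd : ∀ t, (fb t).natDegree = f.natDegree := fun t => by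
      rw [(hf.map _).natDegree_map, hf.natDegree_map]
    have hsub : T ⊆ (Finset.univ : Finset (ZMod p)).biUnion
        fun t => (fb t).roots.toFinset.image fun y => (t, y) := by
      intro w hw
      obtain ⟨z0, hz0, rfl⟩ := Finset.mem_image.1 hw
      refine Finset.mem_biUnion.2 ⟨(z0.1 : ZMod p), Finset.mem_univ _, ?_⟩
      refine Finset.mem_image.2 ⟨(z0.2 : ZMod p), ?_, rfl⟩
      rw [Multiset.mem_toFinset, mem_roots (hfb _).ne_zero, IsRoot, eval_mod, (hS z0 hz0).2.2.1]
      simp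
    refine (Finset.card_le_card hsub).trans ?_
    have := Finset.card_biUnion_le_card_mul (Finset.univ : Finset (ZMod p))
      (fun t => (fb t).roots.toFinset.image fun y => (t, y)) f.natDegree (fun t _ => by
        refine Finset.card_image_le.trans ((Multiset.toFinset_card_le _).trans ?_)
        rw [← hfd t]; exact card_roots' _)
    simpa [ZMod.card] using this
  exact (Finset.card_le_card h1).trans (h2.trans (Nat.mul_le_mul_right _ h3))

lemma exists_primes (N : ℕ) (hN : 1 ≤ N) (r : ℕ) :
    ∃ s : Finset ℕ, s.card = r ∧ ∀ p ∈ s, p.Prime ∧ N < p ∧ p ≤ 2 ^ r * N := by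
  induction r with
  | zero => exact ⟨∅, by simp⟩
  | succ r ih =>
    obtain ⟨s, hs, h⟩ := ih
    obtain ⟨p, hp, h1, h2⟩ := Nat.exists_prime_lt_and_le_two_mul (2 ^ r * N) (by positivity)
    refine ⟨insert p s, ?_, ?_⟩
    · rw [Finset.card_insert_of_notMem, hs]
      intro hps
      have := (h p hps).2.2
      omega
    · intro q hq
      have e : 2 ^ (r + 1) * N = 2 * (2 ^ r * N) := by ring
      rcases Finset.mem_insert.1 hq with rfl | hq
      · refine ⟨hp, lt_of_le_of_lt (Nat.le_mul_of_pos_left _ (by positivity)) h1, by omega⟩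
      · obtain ⟨a, b, c⟩ := h q hq
        exact ⟨a, b, by omega⟩

lemma curve_count_nat (f : ℤ[X][X]) (hf : f.Monic) (k N c A B : ℕ) (hA : 1 ≤ A) (hN : 1 ≤ N)
    (hB : 1 ≤ B) (hNB : 4 * B ≤ N ^ 2) (hN2 : B + 2 ≤ N ^ 2)
    (hA2 : 4 * A ^ 2 * (B + 2) ^ c ≤ 4 ^ (A - 1)) (hc : 1 ≤ c)
    (hk : ∀ j, (f.coeff j).natDegree ≤ k)
    (hno : ∀ P Q : ℤ[X], Q ≠ 0 → homSub f P Q ≠ 0)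
    (S : Finset (ℤ × ℤ)) (hS : ∀ z ∈ S, |z.1| ≤ B ∧ |z.2| ≤ ((B + 2) ^ c : ℕ) ∧
      (f.map (evalRingHom z.1)).eval z.2 = 0 ∧
      ((derivative f).map (evalRingHom z.1)).eval z.2 ≠ 0 ∧
      |((derivative f).map (evalRingHom z.1)).eval z.2| ≤ ((B + 2) ^ c : ℕ)) :
    (S.image Prod.fst).card ≤
      2 * c * (2 ^ (2 * c) * N * f.natDegree * (k + A * f.natDegree + A)) := by
  classical
  obtain ⟨s, hs, hsp⟩ := exists_primes N hN (2 * c)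
  have h1 : S.image Prod.fst ⊆ s.biUnion fun p =>
      (S.filter fun z => ¬ (p : ℤ) ∣ ((derivative f).map (evalRingHom z.1)).eval z.2).image Prod.fst := by
    intro t ht
    obtain ⟨z, hzS, rfl⟩ := Finset.mem_image.1 ht
    obtain ⟨_, _, _, hd0, hd⟩ := hS z hzS
    obtain ⟨p, hps, hpd⟩ : ∃ p ∈ s, ¬ (p : ℤ) ∣ ((derivative f).map (evalRingHom z.1)).eval z.2 := by
      by_contra hcon
      push Not at hcon
      set w := ((derivative f).map (evalRingHom z.1)).eval z.2
      have e1 : ∏ p ∈ s, p ∣ w.natAbs := by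
        apply Finset.prod_primes_dvd
        · intro p hp; exact Nat.prime_iff.1 (hsp p hp).1
        · intro p hp; exact Int.natCast_dvd.1 (hcon p hp)
      have e2 : ∏ p ∈ s, p ≤ w.natAbs := Nat.le_of_dvd (Int.natAbs_pos.2 hd0) e1
      have e3 : (N + 1) ^ (2 * c) ≤ ∏ p ∈ s, p := by
        rw [← hs]
        exact Finset.pow_card_le_prod s _ _ fun p hp => (hsp p hp).2.1
      have e4 : w.natAbs ≤ (B + 2) ^ c := by
        have := hd; rw [Int.abs_eq_natAbs] at this; exact_mod_cast this
      have e5 : (B + 2) ^ c ≤ (N ^ 2) ^ c := by gcongr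
      rw [← pow_mul] at e5
      have e6 : N ^ (2 * c) < (N + 1) ^ (2 * c) := Nat.pow_lt_pow_left (by omega) (by omega)
      omega
    exact Finset.mem_biUnion.2 ⟨p, hps, Finset.mem_image_of_mem _ (Finset.mem_filter.2 ⟨hzS, hpd⟩)⟩
  refine (Finset.card_le_card h1).trans ?_
  rw [← hs]
  apply Finset.card_biUnion_le_card_mul
  intro p hps
  obtain ⟨hp, hp1, hp2⟩ := hsp p hps
  have hpN : N ^ 2 ≤ p ^ 2 := by gcongr
  refine (prime_count f hf k p A B ((B + 2) ^ c) hp hA hB (Nat.one_le_pow _ _ (by omega))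
    (hNB.trans hpN) hA2 hk hno _ ?_).trans ?_
  · intro z hz
    obtain ⟨hzS, hzd⟩ := Finset.mem_filter.1 hz
    obtain ⟨a, b, c', d, e⟩ := hS z hzS
    exact ⟨a, b, c', hzd⟩
  · rw [hs]; gcongr

lemma sq_le_two_pow (A : ℕ) : A ^ 2 ≤ 2 ^ (A + 1) := by
  induction A using Nat.strong_induction_on with
  | _ A ih =>
    rcases Nat.lt_or_ge A 4 with h | h
    · interval_cases A <;> norm_num
    · obtain ⟨a, rfl⟩ : ∃ a, A = a + 1 := ⟨A - 1, by omega⟩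
      have := ih a (by omega)
      have e : 2 ^ (a + 1 + 1) = 2 * 2 ^ (a + 1) := by ring
      nlinarith

lemma one_le_log (B : ℕ) (hB : 1 ≤ B) : 1 ≤ Real.log ((B : ℝ) + 2) := by
  rw [Real.le_log_iff_exp_le (by positivity)]
  have : (1 : ℝ) ≤ B := by exact_mod_cast hB
  have := Real.exp_one_lt_d9
  linarith

lemma curve_count (D k c : ℕ) (hc : 1 ≤ c) : ∃ K : ℝ, 0 ≤ K ∧ ∀ B : ℕ, 1 ≤ B →
    ∀ f : ℤ[X][X], f.Monic → f.natDegree = D → (∀ j, (f.coeff j).natDegree ≤ k) →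
    (∀ P Q : ℤ[X], Q ≠ 0 → homSub f P Q ≠ 0) →
    ∀ S : Finset (ℤ × ℤ), (∀ z ∈ S, |z.1| ≤ B ∧ |z.2| ≤ ((B + 2) ^ c : ℕ) ∧
      (f.map (evalRingHom z.1)).eval z.2 = 0 ∧
      ((derivative f).map (evalRingHom z.1)).eval z.2 ≠ 0 ∧
      |((derivative f).map (evalRingHom z.1)).eval z.2| ≤ ((B + 2) ^ c : ℕ)) →
    ((S.image Prod.fst).card : ℝ) ≤ K * (√(B : ℝ) * Real.log ((B : ℝ) + 2)) := by
  refine ⟨2 * c * (2 ^ (2 * c) * 4 * D * (k + (3 * c + 16) * D + (3 * c + 16))), by positivity, ?_⟩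
  intro B hB f hf hD hk hno S hS
  set s := Nat.sqrt B with hs
  set A := c * Nat.clog 2 (B + 2) + 16 with hA
  have hs1 : B < (s + 1) * (s + 1) := Nat.lt_succ_sqrt B
  have hmain := curve_count_nat f hf k (2 * s + 2) c A B (by omega) (by omega) hB (by nlinarith)
    (by nlinarith) ?_ hc hk hno S hS
  · have hL := one_le_log B hB
    set L := Real.log ((B : ℝ) + 2) with hLdef
    have hBr : (1 : ℝ) ≤ B := by exact_mod_cast hB
    have hsq1 : 1 ≤ √(B : ℝ) := by rw [Real.one_le_sqrt]; exact hBr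
    have hN : ((2 * s + 2 : ℕ) : ℝ) ≤ 4 * √(B : ℝ) := by
      have : (s : ℝ) ≤ √(B : ℝ) := Real.nat_sqrt_le_real_sqrt
      push_cast; linarith
    have hAr : (A : ℝ) ≤ (3 * c + 16) * L := by
      have h1 : (Nat.clog 2 (B + 2) : ℝ) ≤ 3 * L := by
        have h2 : 2 ^ (Nat.clog 2 (B + 2) - 1) < B + 2 :=
          Nat.pow_pred_clog_lt_self (b := 2) (by norm_num) (show 1 < B + 2 by omega)
        have h2' : (2 : ℝ) ^ (Nat.clog 2 (B + 2) - 1) < (B : ℝ) + 2 := by exact_mod_cast h2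
        have h3 := Real.log_lt_log (by positivity) h2'
        rw [Real.log_pow] at h3
        have h4 := Real.log_two_gt_d9
        have h5 : (Nat.clog 2 (B + 2) : ℝ) ≤ ((Nat.clog 2 (B + 2) - 1 : ℕ) : ℝ) + 1 := by
          have : Nat.clog 2 (B + 2) ≤ (Nat.clog 2 (B + 2) - 1) + 1 := by omega
          exact_mod_cast this
        have h6 : (0 : ℝ) ≤ ((Nat.clog 2 (B + 2) - 1 : ℕ) : ℝ) := by positivity
        nlinarith
      rw [hA]; push_cast
      have : (c : ℝ) * (Nat.clog 2 (B + 2) : ℝ) ≤ c * (3 * L) := by gcongr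
      linarith
    have h7 : ((S.image Prod.fst).card : ℝ) ≤
        2 * c * (2 ^ (2 * c) * ((2 * s + 2 : ℕ) : ℝ) * D * (k + A * D + A)) := by
      rw [← hD]; exact_mod_cast hmain
    have h8 : (k : ℝ) + A * D + A ≤ (k + (3 * c + 16) * D + (3 * c + 16)) * L := by
      have a1 : (k : ℝ) ≤ k * L := by
        have : (0 : ℝ) ≤ k := by positivity
        nlinarith
      have a2 : (A : ℝ) * D ≤ (3 * c + 16) * L * D := by gcongr
      linarith
    calc _ ≤ 2 * c * (2 ^ (2 * c) * (4 * √(B : ℝ)) * D *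
            ((k + (3 * c + 16) * D + (3 * c + 16)) * L)) := by
            refine h7.trans ?_
            gcongr
      _ = _ := by ring
  · have h1 : (B + 2) ≤ 2 ^ Nat.clog 2 (B + 2) := Nat.le_pow_clog (by norm_num) _
    have h2 : (B + 2) ^ c ≤ 2 ^ (A - 16) := by
      calc (B + 2) ^ c ≤ (2 ^ Nat.clog 2 (B + 2)) ^ c := by gcongr
        _ = 2 ^ (A - 16) := by rw [← pow_mul]; congr 1; rw [hA, Nat.add_sub_cancel, mul_comm]
    have h3 := sq_le_two_pow A
    calc 4 * A ^ 2 * (B + 2) ^ c ≤ 4 * 2 ^ (A + 1) * 2 ^ (A - 16) := by gcongr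
      _ = 2 ^ (2 + (A + 1) + (A - 16)) := by rw [pow_add _ (2 + (A + 1)), pow_add _ 2, show (2 : ℕ) ^ 2 = 4 from rfl]
      _ ≤ 2 ^ (2 * (A - 1)) := by gcongr <;> omega
      _ = _ := by rw [pow_mul]; norm_num

/-! Counting lemmas in boxes -/

/-- Integer box. -/
def ibox (B : ℕ) : Finset ℤ := Finset.Icc (-(B : ℤ)) B

lemma mem_ibox {B : ℕ} {t : ℤ} : t ∈ ibox B ↔ |t| ≤ B := by
  rw [ibox, Finset.mem_Icc, abs_le]

lemma card_ibox (B : ℕ) : (ibox B).card = 2 * B + 1 := by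
  rw [ibox, Int.card_Icc]; omega

def nbox (m B : ℕ) : Finset (Fin m → ℤ) := Fintype.piFinset fun _ => ibox B

lemma mem_nbox {m B : ℕ} {x : Fin m → ℤ} : x ∈ nbox m B ↔ ∀ i, |x i| ≤ B := by
  simp [nbox, mem_ibox]

lemma card_nbox (m B : ℕ) : (nbox m B).card = (2 * B + 1) ^ m := by
  simp [nbox, card_ibox]

open Classical in
lemma zero_count (m : ℕ) (P : MvPolynomial (Fin m) ℤ) (hP : P ≠ 0) : ∃ K : ℝ, 0 ≤ K ∧
    ∀ B : ℕ, 1 ≤ B → (((nbox m B).filter fun x => MvPolynomial.eval x P = 0).card : ℝ) * B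
      ≤ K * B ^ m := by
  refine ⟨P.totalDegree * 3 ^ m, by positivity, fun B hB => ?_⟩
  have h := MvPolynomial.schwartz_zippel_totalDegree hP (ibox B)
  have hcard : ((ibox B).card : ℚ≥0) = 2 * B + 1 := by rw [card_ibox]; push_cast; rfl
  change (((nbox m B).filter fun x => MvPolynomial.eval x P = 0).card : ℚ≥0) / _ ≤ _ at h
  rw [hcard, div_le_div_iff₀ (by positivity) (by positivity)] at h
  have h' : (((nbox m B).filter fun x => MvPolynomial.eval x P = 0).card : ℝ) * (2 * B + 1) ≤
      P.totalDegree * (2 * B + 1) ^ m := by exact_mod_cast h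
  have hBr : (1 : ℝ) ≤ B := by exact_mod_cast hB
  calc _ ≤ (((nbox m B).filter fun x => MvPolynomial.eval x P = 0).card : ℝ) * (2 * B + 1) := by
        gcongr; linarith
    _ ≤ P.totalDegree * (2 * B + 1) ^ m := h'
    _ ≤ P.totalDegree * (3 * B) ^ m := by gcongr; linarith
    _ = _ := by rw [mul_pow]; ring

/-- Evaluation `ℤ[x₁..xₘ][T] → ℤ`. -/
def ev {m : ℕ} (x : Fin m → ℤ) (t : ℤ) : (MvPolynomial (Fin m) ℤ)[X] →+* ℤ :=
  (evalRingHom t).comp (mapRingHom (MvPolynomial.eval x))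

def Bdd {α : Type*} (S : ℕ → Set α) (a : α → ℤ) : Prop :=
  ∃ c : ℕ, ∀ B : ℕ, 1 ≤ B → ∀ x ∈ S B, |a x| ≤ ((B + 2) ^ c : ℕ)

lemma Bdd.const {α : Type*} (S : ℕ → Set α) (k : ℤ) : Bdd S fun _ => k := by
  refine ⟨k.natAbs, fun B _ x _ => ?_⟩
  have h1 : k.natAbs ≤ (B + 2) ^ k.natAbs :=
    (Nat.lt_pow_self (by omega)).le
  rw [Int.abs_eq_natAbs]
  exact_mod_cast h1

lemma Bdd.add {α : Type*} {S : ℕ → Set α} {a b : α → ℤ} (ha : Bdd S a) (hb : Bdd S b) :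
    Bdd S fun x => a x + b x := by
  obtain ⟨c, hc⟩ := ha
  obtain ⟨d, hd⟩ := hb
  refine ⟨c + d + 1, fun B hB x hx => ?_⟩
  have h1 := hc B hB x hx
  have h2 := hd B hB x hx
  have h3 : (B + 2) ^ c ≤ (B + 2) ^ (c + d) := Nat.pow_le_pow_right (by omega) (by omega)
  have h4 : (B + 2) ^ d ≤ (B + 2) ^ (c + d) := Nat.pow_le_pow_right (by omega) (by omega)
  have h5 : (B + 2) ^ c + (B + 2) ^ d ≤ (B + 2) ^ (c + d + 1) := by
    rw [pow_succ]
    have h6 : (B + 2) ^ (c + d) * 2 ≤ (B + 2) ^ (c + d) * (B + 2) := by gcongr; omega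
    omega
  calc |a x + b x| ≤ |a x| + |b x| := abs_add_le _ _
    _ ≤ (((B + 2) ^ c + (B + 2) ^ d : ℕ) : ℤ) := by push_cast at h1 h2 ⊢; linarith
    _ ≤ _ := by exact_mod_cast h5

lemma Bdd.mul {α : Type*} {S : ℕ → Set α} {a b : α → ℤ} (ha : Bdd S a) (hb : Bdd S b) :
    Bdd S fun x => a x * b x := by
  obtain ⟨c, hc⟩ := ha
  obtain ⟨d, hd⟩ := hb
  refine ⟨c + d, fun B hB x hx => ?_⟩
  rw [abs_mul, pow_add, Nat.cast_mul]
  exact mul_le_mul (hc B hB x hx) (hd B hB x hx) (abs_nonneg _) (by positivity)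

lemma Bdd.mono {α : Type*} {S : ℕ → Set α} {a : α → ℤ} (ha : Bdd S a) :
    ∃ c0, ∀ c, c0 ≤ c → ∀ B : ℕ, 1 ≤ B → ∀ x ∈ S B, |a x| ≤ ((B + 2) ^ c : ℕ) := by
  obtain ⟨c0, h⟩ := ha
  refine ⟨c0, fun c hc B hB x hx => (h B hB x hx).trans ?_⟩
  have : (B + 2) ^ c0 ≤ (B + 2) ^ c := Nat.pow_le_pow_right (by omega) hc
  exact_mod_cast this

lemma Bdd.poly {α : Type*} {S : ℕ → Set α} {R : Type*} [CommRing R] (φ : α → R →+* ℤ) (y : α → ℤ)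
    (hφ : ∀ r, Bdd S fun z => φ z r) (hy : Bdd S y) (F : R[X]) :
    Bdd S fun z => (F.map (φ z)).eval (y z) := by
  induction F using Polynomial.induction_on with
  | C a => simpa using hφ a
  | add p q hp hq => simpa using hp.add hq
  | monomial n a ih =>
    simp only [pow_succ, ← mul_assoc, Polynomial.map_mul, eval_mul, map_X, eval_X] at ih ⊢
    exact ih.mul hy

def pbox (m : ℕ) : ℕ → Set ((Fin m → ℤ) × ℤ × ℤ) :=
  fun B => {z | z.1 ∈ nbox m B ∧ z.2.1 ∈ ibox B}

lemma bdd_ev {m : ℕ} (a : (MvPolynomial (Fin m) ℤ)[X]) : Bdd (pbox m) fun z => ev z.1 z.2.1 a := by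
  have h0 : ∀ r : MvPolynomial (Fin m) ℤ, Bdd (pbox m) fun z => MvPolynomial.eval z.1 r := by
    intro r
    induction r using MvPolynomial.induction_on with
    | C a => simpa using Bdd.const _ a
    | add p q hp hq => simpa using hp.add hq
    | mul_X p i hp =>
      simp only [map_mul, MvPolynomial.eval_X]
      refine hp.mul ⟨1, fun B hB z hz => ?_⟩
      have := mem_nbox.1 hz.1 i
      push_cast; linarith
  have := Bdd.poly (S := pbox m) (fun z => MvPolynomial.eval z.1) (fun z => z.2.1) h0
    ⟨1, fun B hB z hz => by have := mem_ibox.1 hz.2; push_cast; linarith⟩ a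
  simpa [ev] using this

lemma root_bound (f : ℤ[X]) (hf : f.Monic) (y : ℤ) (h : f.eval y = 0) :
    |y| ≤ ∑ j ∈ Finset.range f.natDegree, |f.coeff j| := by
  set D := f.natDegree with hD
  rcases Nat.eq_zero_or_pos D with h0 | h0
  · rw [hf.natDegree_eq_zero.1 h0] at h; simp at h
  by_cases hy : y = 0
  · subst hy; simp; exact Finset.sum_nonneg fun _ _ => abs_nonneg _
  have hy1 : 1 ≤ |y| := Int.one_le_abs hy
  rw [eval_eq_sum_range, Finset.sum_range_succ, ← hD, hD, hf.coeff_natDegree, ← hD, one_mul] at h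
  have h1 : |y| ^ D ≤ (∑ j ∈ Finset.range D, |f.coeff j|) * |y| ^ (D - 1) := by
    have : y ^ D = -∑ j ∈ Finset.range D, f.coeff j * y ^ j := by linarith
    rw [← abs_pow, this, abs_neg, Finset.sum_mul]
    refine (Finset.abs_sum_le_sum_abs _ _).trans (Finset.sum_le_sum fun j hj => ?_)
    rw [abs_mul, abs_pow]
    gcongr
    have := Finset.mem_range.1 hj; omega
  have h2 : |y| ^ D = |y| * |y| ^ (D - 1) := by
    rw [← pow_succ']; congr 1; omega
  rw [h2] at h1
  exact le_of_mul_le_mul_right h1 (by positivity)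

lemma Bdd.sum_abs {α : Type*} {S : ℕ → Set α} (a : ℕ → α → ℤ) (h : ∀ j, Bdd S (a j)) (D : ℕ) :
    Bdd S fun z => ∑ j ∈ Finset.range D, |a j z| := by
  induction D with
  | zero => simpa using Bdd.const S 0
  | succ D ih =>
    simp only [Finset.sum_range_succ]
    obtain ⟨c, hc⟩ := h D
    exact ih.add ⟨c, fun B hB x hx => by rw [abs_abs]; exact hc B hB x hx⟩

def rbox {m : ℕ} (F : (MvPolynomial (Fin m) ℤ)[X][X]) : ℕ → Set ((Fin m → ℤ) × ℤ × ℤ) :=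
  fun B => {z | z ∈ pbox m B ∧ (F.map (ev z.1 z.2.1)).eval z.2.2 = 0}

lemma bdd_y {m : ℕ} (F : (MvPolynomial (Fin m) ℤ)[X][X]) (hF : F.Monic) :
    Bdd (rbox F) fun z => z.2.2 := by
  have hev : ∀ a, Bdd (rbox F) fun z => ev z.1 z.2.1 a := by
    intro a
    obtain ⟨c, hc⟩ := bdd_ev a
    exact ⟨c, fun B hB z hz => hc B hB z hz.1⟩
  obtain ⟨c, hc⟩ := Bdd.sum_abs (S := rbox F) (fun j z => ev z.1 z.2.1 (F.coeff j)) (fun j => hev _)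
      F.natDegree
  refine ⟨c, fun B hB z hz => le_trans ?_ ((le_abs_self _).trans (hc B hB z hz))⟩
  have h1 := root_bound _ (hF.map (ev z.1 z.2.1)) _ hz.2
  rw [hF.natDegree_map] at h1
  simp only [coeff_map] at h1
  exact h1

lemma bdd_all {m : ℕ} (F : (MvPolynomial (Fin m) ℤ)[X][X]) (hF : F.Monic) :
    ∃ c : ℕ, 1 ≤ c ∧ ∀ B : ℕ, 1 ≤ B → ∀ x ∈ nbox m B, ∀ t ∈ ibox B, ∀ y : ℤ,
      (F.map (ev x t)).eval y = 0 → |y| ≤ ((B + 2) ^ c : ℕ) ∧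
      |((derivative F).map (ev x t)).eval y| ≤ ((B + 2) ^ c : ℕ) := by
  have hev : ∀ a, Bdd (rbox F) fun z => ev z.1 z.2.1 a := by
    intro a
    obtain ⟨c, hc⟩ := bdd_ev a
    exact ⟨c, fun B hB z hz => hc B hB z hz.1⟩
  have hy := bdd_y F hF
  obtain ⟨c1, h1⟩ := hy.mono
  obtain ⟨c2, h2⟩ := (Bdd.poly (S := rbox F) (fun z => ev z.1 z.2.1) (fun z => z.2.2) hev hy
    (derivative F)).mono
  refine ⟨c1 + c2 + 1, by omega, fun B hB x hx t ht y h => ⟨?_, ?_⟩⟩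
  · exact h1 (c1 + c2 + 1) (by omega) B hB (x, t, y) ⟨⟨hx, ht⟩, h⟩
  · exact h2 (c1 + c2 + 1) (by omega) B hB (x, t, y) ⟨⟨hx, ht⟩, h⟩

lemma root_natDegree_le {K : Type*} [CommRing K] [IsDomain K] (f : K[X][X]) (hf : f.Monic) (k : ℕ)
    (hk : ∀ j, (f.coeff j).natDegree ≤ k) (q : K[X]) (hq : f.eval q = 0) : q.natDegree ≤ k := by
  by_contra hlt
  push Not at hlt
  have hD : f.natDegree ≠ 0 := by
    intro h0
    have := hf.natDegree_eq_zero.1 h0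
    rw [this] at hq
    simp at hq
  obtain ⟨d, hd⟩ := Nat.exists_eq_succ_of_ne_zero hD
  rw [eval_eq_sum_range, hd, Finset.sum_range_succ] at hq
  have h1 : f.coeff d.succ = 1 := by rw [← hd]; exact hf
  rw [h1, one_mul] at hq
  have h2 : q ^ d.succ = - ∑ x ∈ Finset.range d.succ, f.coeff x * q ^ x := by
    rw [eq_neg_iff_add_eq_zero, add_comm]; exact hq
  have h3 : (∑ x ∈ Finset.range d.succ, f.coeff x * q ^ x).natDegree ≤ k + d * q.natDegree := by
    apply natDegree_sum_le_of_forall_le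
    intro j hj
    have hj' : j ≤ d := by simpa [Nat.lt_succ_iff] using hj
    refine natDegree_mul_le_of_le (hk j) (natDegree_pow_le.trans ?_)
    exact Nat.mul_le_mul_right _ hj'
  have h4 := congrArg natDegree h2
  rw [natDegree_neg, natDegree_pow] at h4
  rw [← h4, Nat.succ_mul] at h3
  omega

lemma homSub_root (f : ℤ[X][X]) (hf : f.Monic) (k : ℕ)
    (hk : ∀ j, (f.coeff j).natDegree ≤ k) (P Q : ℤ[X]) (hQ : Q ≠ 0) (h : homSub f P Q = 0) :
    ∃ q : ℚ[X], q.natDegree ≤ k ∧ (f.map (mapRingHom (Int.castRingHom ℚ))).eval q = 0 := by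
  set f' := f.map (mapRingHom (Int.castRingHom ℚ)) with hf'
  have hm : f'.Monic := hf.map _
  set φ : ℤ[X] →+* FractionRing ℚ[X] := (algebraMap ℚ[X] (FractionRing ℚ[X])).comp
    (mapRingHom (Int.castRingHom ℚ)) with hφ
  have hφi : Function.Injective φ := by
    rw [hφ, RingHom.coe_comp]
    exact (IsFractionRing.injective _ _).comp (map_injective _ (RingHom.injective_int _))
  have hQ' : φ Q ≠ 0 := by
    rw [Ne, map_eq_zero_iff _ hφi]; exact hQ
  set r := - φ P / φ Q with hr
  have h0 : eval₂ (algebraMap ℚ[X] (FractionRing ℚ[X])) r f' = 0 := by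
    rw [hf', eval₂_map, ← hφ, eval₂_eq_sum_range]
    have h1 := congrArg φ h
    rw [homSub, map_sum, map_zero] at h1
    have h2 : φ Q ^ f.natDegree ≠ 0 := pow_ne_zero _ hQ'
    apply (mul_right_inj' h2).1
    rw [mul_zero, ← h1, Finset.mul_sum]
    apply Finset.sum_congr rfl
    intro j hj
    have hj' : j ≤ f.natDegree := by simpa [Nat.lt_succ_iff] using hj
    rw [map_mul, map_mul, map_pow, map_pow, map_neg, hr, div_pow]
    obtain ⟨d, hd⟩ := Nat.exists_eq_add_of_le hj'
    rw [hd, Nat.add_sub_cancel_left, pow_add]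
    field_simp
  have hint : IsIntegral ℚ[X] r := ⟨f', hm, h0⟩
  obtain ⟨q, hq⟩ := IsIntegrallyClosed.isIntegral_iff.1 hint
  have hq0 : f'.eval q = 0 := by
    rw [← hq, eval₂_at_apply] at h0
    exact (map_eq_zero_iff _ (IsFractionRing.injective _ _)).1 h0
  refine ⟨q, root_natDegree_le f' hm k ?_ q hq0, hq0⟩
  intro j
  rw [hf', coeff_map]
  exact natDegree_map_le.trans (hk j)

abbrev MR (m : ℕ) := MvPolynomial (Fin m) ℤ
abbrev MK (m : ℕ) := FractionRing (MR m)
abbrev MKb (m : ℕ) := AlgebraicClosure (MK m)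

/-- generic polynomial of degree `k` -/
def genQ (R : Type*) [CommRing R] (k : ℕ) : (MvPolynomial (Fin (k+1)) R)[X] :=
  ∑ j : Fin (k+1), C (MvPolynomial.X j) * X ^ (j : ℕ)

/-- the generic evaluation -/
def genE {R : Type*} [CommRing R] (k : ℕ) (F : R[X][X]) : (MvPolynomial (Fin (k+1)) R)[X] :=
  (F.map (mapRingHom MvPolynomial.C)).eval (genQ R k)

lemma genE_spec {R S : Type*} [CommRing R] [CommRing S] (k : ℕ) (F : R[X][X]) (φ : R →+* S)
    (a : Fin (k+1) → S) :
    (genE k F).map (MvPolynomial.eval₂Hom φ a) =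
      (F.map (mapRingHom φ)).eval (∑ j : Fin (k+1), C (a j) * X ^ (j : ℕ)) := by
  have h1 : (genQ R k).map (MvPolynomial.eval₂Hom φ a) = ∑ j : Fin (k+1), C (a j) * X ^ (j : ℕ) := by
    rw [genQ, Polynomial.map_sum]
    simp
  rw [← h1, genE, ← coe_mapRingHom, ← Polynomial.eval₂_at_apply, eval₂_eq_eval_map, map_map, eval_map, eval_map]
  congr 1
  ext1
  · ext1 r; simp
  · simp

lemma sum_fin_eq {S : Type*} [CommRing S] (k : ℕ) (q : S[X]) (hq : q.natDegree ≤ k) :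
    ∑ j : Fin (k+1), C (q.coeff j) * X ^ (j : ℕ) = q := by
  rw [Fin.sum_univ_eq_sum_range (fun j => C (q.coeff j) * X ^ j) (k+1)]
  exact (as_sum_range_C_mul_X_pow' q (by omega)).symm

lemma exists_point {K : Type*} [Field K] {k : ℕ} (J : Ideal (MvPolynomial (Fin k) K))
    (hJ : J.IsMaximal) : ∃ ψ : MvPolynomial (Fin k) K →ₐ[K] AlgebraicClosure K, ∀ a ∈ J, ψ a = 0 := by
  let : Field (MvPolynomial (Fin k) K ⧸ J) := Ideal.Quotient.field J
  have hfin : Module.Finite K (MvPolynomial (Fin k) K ⧸ J) :=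
    finite_of_finite_type_of_isJacobsonRing _ _
  let ι : (MvPolynomial (Fin k) K ⧸ J) →ₐ[K] AlgebraicClosure K := IsAlgClosed.lift
  refine ⟨ι.comp (Ideal.Quotient.mkₐ K J), fun a ha => ?_⟩
  rw [AlgHom.comp_apply, Ideal.Quotient.mkₐ_eq_mk, Ideal.Quotient.eq_zero_iff_mem.2 ha, map_zero]

attribute [local instance] MvPolynomial.algebraMvPolynomial in
lemma dich1 (m : ℕ) (F : (MR m)[X][X]) (hF : F.Monic) :
    (∃ Δ : MR m, Δ ≠ 0 ∧ ∀ x, MvPolynomial.eval x Δ ≠ 0 → ∀ P Q : ℤ[X], Q ≠ 0 →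
      homSub (F.map (mapRingHom (MvPolynomial.eval x))) P Q ≠ 0) ∨
    (∃ q : (MKb m)[X], (F.map (mapRingHom (algebraMap (MR m) (MKb m)))).eval q = 0) := by
  obtain ⟨k, hk⟩ : ∃ k, ∀ j, (F.coeff j).natDegree ≤ k := by
    refine ⟨F.support.sup fun j => (F.coeff j).natDegree, fun j => ?_⟩
    by_cases hj : j ∈ F.support
    · exact Finset.le_sup (f := fun j => (F.coeff j).natDegree) hj
    · simp [notMem_support_iff.1 hj]
  set I : Ideal (MvPolynomial (Fin (k+1)) (MR m)) := Ideal.span (Set.range (genE k F).coeff) with hI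
  by_cases hΔ : ∃ Δ : MR m, Δ ≠ 0 ∧ MvPolynomial.C Δ ∈ I
  · left
    obtain ⟨Δ, h0, hΔI⟩ := hΔ
    refine ⟨Δ, h0, fun x hx P Q hQ h => ?_⟩
    obtain ⟨q, hqk, hq⟩ := homSub_root _ (hF.map _) k
      (fun j => by rw [coeff_map]; exact natDegree_map_le.trans (hk j)) P Q hQ h
    set φ : MR m →+* ℚ := (Int.castRingHom ℚ).comp (MvPolynomial.eval x) with hφ
    have h1 := genE_spec k F φ (fun j => q.coeff j)
    rw [sum_fin_eq k q hqk] at h1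
    rw [map_map, mapRingHom_comp, ← hφ] at hq
    rw [hq] at h1
    have h2 : I ≤ RingHom.ker (MvPolynomial.eval₂Hom φ (fun j : Fin (k+1) => q.coeff j)) := by
      rw [hI, Ideal.span_le]
      rintro _ ⟨i, rfl⟩
      have := congrArg (fun p => p.coeff i) h1
      simpa [coeff_map] using this
    have h3 := h2 hΔI
    rw [RingHom.mem_ker, MvPolynomial.coe_eval₂Hom, MvPolynomial.eval₂_C] at h3
    apply hx
    have : ((MvPolynomial.eval x Δ : ℤ) : ℚ) = 0 := h3
    exact_mod_cast this
  · right
    push Not at hΔ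
    let Mo := (nonZeroDivisors (MR m)).map (MvPolynomial.C (σ := Fin (k+1)))
    have hdis : Disjoint (Mo : Set _) (I : Set (MvPolynomial (Fin (k+1)) (MR m))) := by
      rw [Set.disjoint_left]
      rintro _ ⟨r, hr, rfl⟩ h
      exact hΔ r (nonZeroDivisors.ne_zero hr) h
    have hloc : IsLocalization Mo (MvPolynomial (Fin (k+1)) (MK m)) := by
      exact MvPolynomial.isLocalization (nonZeroDivisors (MR m)) (MK m)
    have hne := (IsLocalization.map_algebraMap_ne_top_iff_disjoint Mo
      (MvPolynomial (Fin (k+1)) (MK m)) I).2 hdis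
    obtain ⟨J, hJ, hIJ⟩ := Ideal.exists_le_maximal _ hne
    obtain ⟨ψ0, hψ0⟩ := exists_point J hJ
    let ψ : MvPolynomial (Fin (k+1)) (MK m) →+* MKb m := ψ0.toRingHom
    refine ⟨∑ j : Fin (k+1), C (ψ (MvPolynomial.X j)) * X ^ (j : ℕ), ?_⟩
    rw [← genE_spec]
    have he : MvPolynomial.eval₂Hom (algebraMap (MR m) (MKb m)) (fun j => ψ (MvPolynomial.X j)) =
        ψ.comp (algebraMap (MvPolynomial (Fin (k+1)) (MR m)) (MvPolynomial (Fin (k+1)) (MK m))) := by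
      apply MvPolynomial.ringHom_ext
      · intro r
        simp only [MvPolynomial.coe_eval₂Hom, MvPolynomial.eval₂_C, RingHom.comp_apply,
          MvPolynomial.algebraMap_def, MvPolynomial.map_C]
        have : ψ (MvPolynomial.C (algebraMap (MR m) (MK m) r)) = ψ0 (algebraMap (MK m) _ (algebraMap (MR m) (MK m) r)) := rfl
        rw [this, AlgHom.commutes, ← IsScalarTower.algebraMap_apply]
      · intro j
        rw [MvPolynomial.coe_eval₂Hom, MvPolynomial.eval₂_X, RingHom.comp_apply, MvPolynomial.algebraMap_def, MvPolynomial.map_X]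
    rw [he]
    ext i : 1
    rw [coeff_map, coeff_zero, RingHom.comp_apply]
    have : algebraMap _ (MvPolynomial (Fin (k+1)) (MK m)) ((genE k F).coeff i) ∈ J :=
      hIJ (Ideal.mem_map_of_mem _ (Ideal.subset_span ⟨i, rfl⟩))
    exact hψ0 _ this

lemma embed_count {K Kb : Type*} [Field K] [Field Kb] [Algebra K Kb] [IsAlgClosed Kb]
    [Algebra.IsAlgebraic K Kb] [CharZero K] (F : K[X][X]) (hF : F.Monic) (q : Kb[X])
    (hq : (F.map (mapRingHom (algebraMap K Kb))).eval q = 0) :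
    ∃ θ : Kb, (∀ j, q.coeff j ∈ K⟮θ⟯) ∧ (minpoly K θ).natDegree ≤ F.natDegree := by
  let S : Set Kb := q.coeffs
  have hSf : S.Finite := Finset.finite_toSet _
  let L : IntermediateField K Kb := IntermediateField.adjoin K S
  have : FiniteDimensional K L := by
    have := hSf.to_subtype
    exact IntermediateField.finiteDimensional_adjoin (fun x _ => Algebra.IsIntegral.isIntegral x)
  have hcL : ∀ j, q.coeff j ∈ L := by
    intro j
    by_cases h : q.coeff j = 0
    · rw [h]; exact L.zero_mem
    · exact IntermediateField.subset_adjoin K S (coeff_mem_coeffs h)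
  obtain ⟨θ, hθ⟩ := Field.exists_primitive_element K L
  -- lift of q
  have hq' : q ∈ lifts (algebraMap L Kb) := by
    rw [lifts_iff_coeff_lifts]
    intro j
    exact ⟨⟨q.coeff j, hcL j⟩, rfl⟩
  obtain ⟨Q, hQ⟩ := hq'
  rw [coe_mapRingHom] at hQ
  have hd : Module.finrank K L ≤ F.natDegree := by
    rw [← AlgHom.card K L Kb]
    classical
    set F' := F.map (mapRingHom (algebraMap K Kb)) with hF'
    have hF0 : F'.Monic := hF.map _
    have hroot : ∀ τ : L →ₐ[K] Kb, F'.eval (Q.map τ.toRingHom) = 0 := by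
      intro τ
      have h1 : (F.map (mapRingHom (algebraMap K L))).eval Q = 0 := by
        apply map_injective (algebraMap L Kb) (algebraMap L Kb).injective
        rw [Polynomial.map_zero, ← hq, ← hQ, hF', ← coe_mapRingHom, ← eval₂_at_apply, eval₂_eq_eval_map, map_map,
          mapRingHom_comp, ← IsScalarTower.algebraMap_eq]
      have h2 := congrArg (Polynomial.map τ.toRingHom) h1
      rw [Polynomial.map_zero, ← coe_mapRingHom, ← eval₂_at_apply, eval₂_eq_eval_map, map_map,
          mapRingHom_comp] at h2
      rw [hF', ← h2]
      congr 3
      exact τ.comp_algebraMap.symm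
    have hinj : Function.Injective (fun τ : L →ₐ[K] Kb => Q.map τ.toRingHom) := by
      intro τ τ' h
      refine IntermediateField.algHom_ext_of_eq_adjoin (F := K) (E := Kb) (S := L) (s := S) (hS := rfl) ?_
      intro x hx
      obtain ⟨j, hj, hj2⟩ := mem_coeffs_iff.1 hx
      have h3 := congrArg (fun p => p.coeff j) h
      simp only [coeff_map] at h3
      have h4 : Q.coeff j = ⟨x, IntermediateField.subset_adjoin K S hx⟩ := by
        apply Subtype.ext
        change ((Q.coeff j : L) : Kb) = x
        rw [hj2, ← hQ, coeff_map]; rfl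
      rw [h4] at h3
      exact h3
    calc Fintype.card (L →ₐ[K] Kb) = (Finset.univ.image (fun τ : L →ₐ[K] Kb => Q.map τ.toRingHom)).card := by
          rw [Finset.card_image_of_injective _ hinj]; rfl
      _ ≤ F'.roots.toFinset.card := by
          apply Finset.card_le_card
          intro z hz
          obtain ⟨τ, -, rfl⟩ := Finset.mem_image.1 hz
          rw [Multiset.mem_toFinset, mem_roots hF0.ne_zero]
          exact hroot τ
      _ ≤ F'.natDegree := (Multiset.toFinset_card_le _).trans (card_roots' _)
      _ = F.natDegree := hF.natDegree_map _
  refine ⟨θ, ?_, ?_⟩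
  · intro j
    have : L = K⟮(θ : Kb)⟯ := by
      have := IntermediateField.lift_adjoin_simple K L θ
      rw [hθ, IntermediateField.lift_top] at this
      exact this
    rw [← this]; exact hcL j
  · have h1 : minpoly K (θ : Kb) = minpoly K θ := minpoly.algebraMap_eq (algebraMap L Kb).injective θ
    rw [h1]
    exact (minpoly.natDegree_le θ).trans hd

/-- `M = E(θ)` where the minimal polynomial of `θ` has coefficients in `R`. -/
def Degen (R : Type*) [CommRing R] (E M : Type*) [Field E] [Algebra R[X] E] [Field M]
    [Algebra E M] : Prop :=
  ∃ (θ : M) (g : R[X]), g.Monic ∧ E⟮θ⟯ = ⊤ ∧ minpoly E θ = g.map ((algebraMap R[X] E).comp C)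

lemma degen_of_root {R : Type*} [CommRing R] [IsDomain R] [IsIntegrallyClosed R] [CharZero R]
    {E M : Type*} [Field E] [Algebra R[X] E] [IsFractionRing R[X] E] [Field M] [Algebra E M]
    (F : R[X][X]) (hF : F.Monic) (y : M) (hy : minpoly E y = F.map (algebraMap R[X] E))
    (hy' : E⟮y⟯ = ⊤) (hint : IsIntegral E y) (q : (AlgebraicClosure (FractionRing R))[X])
    (hq : (F.map (mapRingHom (algebraMap R (AlgebraicClosure (FractionRing R))))).eval q = 0) :
    Degen R E M := by
  set K := FractionRing R
  set Kb := AlgebraicClosure K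
  have : CharZero K := charZero_of_injective_algebraMap (IsFractionRing.injective R K)
  obtain ⟨θ0, hθ0, hdeg0⟩ := embed_count (F.map (mapRingHom (algebraMap R K))) (hF.map _) q (by
    rw [map_map, mapRingHom_comp, ← IsScalarTower.algebraMap_eq]; exact hq)
  rw [hF.natDegree_map] at hdeg0
  have hFd : F.natDegree = Module.finrank E M := by
    have h1 := IntermediateField.adjoin.finrank hint
    rw [hy', hy, hF.natDegree_map, IntermediateField.finrank_top'] at h1
    exact h1.symm
  have hfd : FiniteDimensional E M := by
    have := IntermediateField.adjoin.finiteDimensional hint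
    rw [hy'] at this
    exact (IntermediateField.topEquiv (F := E) (E := M)).toLinearEquiv.finiteDimensional
  -- integral multiple
  have halg : IsAlgebraic R θ0 := by
    have : IsAlgebraic K θ0 := Algebra.IsAlgebraic.isAlgebraic θ0
    exact (IsFractionRing.isAlgebraic_iff R K Kb).2 this
  obtain ⟨r, hr0, hrint⟩ := halg.exists_integral_multiple
  set θ1 := r • θ0 with hθ1
  have hrK : algebraMap R K r ≠ 0 := by
    rw [Ne, map_eq_zero_iff _ (IsFractionRing.injective R K)]; exact hr0
  have hθ1' : θ1 = algebraMap K Kb (algebraMap R K r) * θ0 := by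
    rw [hθ1, Algebra.smul_def, ← IsScalarTower.algebraMap_apply]
  have hadj : K⟮θ1⟯ = K⟮θ0⟯ := by
    apply le_antisymm
    · rw [IntermediateField.adjoin_simple_le_iff, hθ1']
      exact mul_mem (IntermediateField.algebraMap_mem _ _) (IntermediateField.mem_adjoin_simple_self K θ0)
    · rw [IntermediateField.adjoin_simple_le_iff]
      have : θ0 = algebraMap K Kb (algebraMap R K r)⁻¹ * θ1 := by
        rw [hθ1', ← mul_assoc, ← map_mul, inv_mul_cancel₀ hrK, map_one, one_mul]
      rw [this]
      exact mul_mem (IntermediateField.algebraMap_mem _ _) (IntermediateField.mem_adjoin_simple_self K _)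
  set g := minpoly R θ1 with hg
  have hgm : g.Monic := minpoly.monic hrint
  have hgK : minpoly K θ1 = g.map (algebraMap R K) := minpoly.isIntegrallyClosed_eq_field_fractions' K hrint
  have hgd : g.natDegree ≤ F.natDegree := by
    have h1 : g.natDegree = (minpoly K θ1).natDegree := by rw [hgK, hgm.natDegree_map]
    rw [h1, ← IntermediateField.adjoin.finrank (Algebra.IsIntegral.isIntegral θ1), hadj,
      IntermediateField.adjoin.finrank (Algebra.IsIntegral.isIntegral θ0)]
    exact hdeg0
  -- the big field
  set Ω := FractionRing Kb[X]
  let φ0 : R[X] →+* Ω := (algebraMap Kb[X] Ω).comp (mapRingHom (algebraMap R Kb))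
  have hRKb : Function.Injective (algebraMap R Kb) := by
    rw [IsScalarTower.algebraMap_eq R K Kb, RingHom.coe_comp]
    exact (algebraMap K Kb).injective.comp (IsFractionRing.injective R K)
  have hφ0 : Function.Injective φ0 := by
    rw [RingHom.coe_comp]
    exact (IsFractionRing.injective _ _).comp (map_injective _ hRKb)
  let : Algebra E Ω := (IsFractionRing.lift hφ0).toAlgebra
  have hEΩ : ∀ a : R[X], algebraMap E Ω (algebraMap R[X] E a) = φ0 a :=
    fun a => IsFractionRing.lift_algebraMap hφ0 a
  let ι : Kb →+* Ω := (algebraMap Kb[X] Ω).comp C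
  have hιR : ∀ a : R, ι (algebraMap R Kb a) = algebraMap E Ω (algebraMap R[X] E (C a)) := by
    intro a
    rw [hEΩ]
    change algebraMap Kb[X] Ω _ = algebraMap Kb[X] Ω _
    simp
  set θ := ι θ1 with hθ
  set y0 := algebraMap Kb[X] Ω q with hy0
  -- θ is a root of g
  have hgθ : aeval θ (g.map ((algebraMap R[X] E).comp C)) = 0 := by
    have h1 : eval₂ (algebraMap R Kb) θ1 g = 0 := minpoly.aeval R θ1
    have h2 := congrArg ι h1
    rw [hom_eval₂, map_zero] at h2
    rw [aeval_def, eval₂_map, ← h2]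
    congr 1
    ext a
    exact (hιR a).symm
  have hθint : IsIntegral E θ := ⟨_, hgm.map _, hgθ⟩
  have hιK : ∀ z : K, ι (algebraMap K Kb z) ∈ E⟮θ⟯ := by
    intro z
    obtain ⟨a, b, hb, rfl⟩ := IsFractionRing.div_surjective (A := R) z
    rw [map_div₀, map_div₀, ← IsScalarTower.algebraMap_apply, ← IsScalarTower.algebraMap_apply, hιR, hιR]
    exact div_mem (IntermediateField.algebraMap_mem _ _) (IntermediateField.algebraMap_mem _ _)
  have hιq : ∀ z ∈ K⟮θ1⟯, ι z ∈ E⟮θ⟯ := by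
    intro z hz
    induction hz using IntermediateField.adjoin_induction with
    | mem x hx => 
      rw [Set.mem_singleton_iff] at hx
      rw [hx]; exact IntermediateField.mem_adjoin_simple_self E θ
    | algebraMap x => exact hιK x
    | add x y _ _ hx hy => rw [map_add]; exact add_mem hx hy
    | inv x _ hx => rw [map_inv₀]; exact inv_mem hx
    | mul x y _ _ hx hy => rw [map_mul]; exact mul_mem hx hy
  have hy0mem : y0 ∈ E⟮θ⟯ := by
    rw [hy0, as_sum_range_C_mul_X_pow q, map_sum]
    refine sum_mem fun j _ => ?_
    rw [map_mul, map_pow]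
    refine mul_mem (hιq _ (hadj ▸ hθ0 j)) (pow_mem ?_ _)
    have : algebraMap Kb[X] Ω X = algebraMap E Ω (algebraMap R[X] E X) := by
      rw [hEΩ]; change _ = algebraMap Kb[X] Ω _; simp
    rw [this]; exact IntermediateField.algebraMap_mem _ _
  have hy0root : aeval y0 (minpoly E y) = 0 := by
    rw [hy, aeval_def, eval₂_map]
    have h2 := congrArg (algebraMap Kb[X] Ω) hq
    rw [map_zero, ← eval₂_at_apply, eval₂_map] at h2
    rw [← h2]
    congr 1
    exact RingHom.ext hEΩ
  let ψ0 : E⟮y⟯ →ₐ[E] Ω := (IntermediateField.algHomAdjoinIntegralEquiv E hint).symm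
    ⟨y0, by rw [mem_aroots]; exact ⟨minpoly.ne_zero hint, hy0root⟩⟩
  have hψ0 : ψ0 (IntermediateField.AdjoinSimple.gen E y) = y0 :=
    IntermediateField.algHomAdjoinIntegralEquiv_symm_apply_gen E hint _
  let ψ : M →ₐ[E] Ω := ψ0.comp ((IntermediateField.equivOfEq hy'.symm).toAlgHom.comp
    (IntermediateField.topEquiv (F := E) (E := M)).symm.toAlgHom)
  have hψ : ψ y = y0 := hψ0
  have hle : ψ.fieldRange ≤ E⟮θ⟯ := by
    rintro _ ⟨z, rfl⟩
    have h1 : E⟮y⟯ ≤ (E⟮θ⟯).comap ψ := by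
      rw [IntermediateField.adjoin_simple_le_iff]
      change ψ y ∈ E⟮θ⟯
      rw [hψ]; exact hy0mem
    rw [hy'] at h1
    exact h1 (IntermediateField.mem_top)
  have hfr : Module.finrank E ψ.fieldRange = F.natDegree := by
    rw [hFd]
    exact (AlgEquiv.ofInjectiveField ψ).toLinearEquiv.finrank_eq.symm
  have : FiniteDimensional E E⟮θ⟯ := IntermediateField.adjoin.finiteDimensional hθint
  have hdvd := minpoly.dvd E θ hgθ
  have hfθ : Module.finrank E E⟮θ⟯ = (minpoly E θ).natDegree := IntermediateField.adjoin.finrank hθint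
  have hle2 : (minpoly E θ).natDegree ≤ g.natDegree := by
    have := natDegree_le_of_dvd hdvd (hgm.map _).ne_zero
    rwa [hgm.natDegree_map] at this
  have heq : ψ.fieldRange = E⟮θ⟯ := by
    apply IntermediateField.eq_of_le_of_finrank_le hle
    rw [hfr, hfθ]; exact hle2.trans hgd
  have hfin : (minpoly E θ).natDegree = F.natDegree := by
    rw [← hfθ, ← heq, hfr]
  obtain ⟨θ', hθ'⟩ : θ ∈ ψ.fieldRange := by
    rw [heq]; exact IntermediateField.mem_adjoin_simple_self E θ
  have hmin : minpoly E θ' = minpoly E θ := by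
    rw [← hθ']; exact (minpoly.algHom_eq ψ ψ.injective θ').symm
  refine ⟨θ', g, hgm, ?_, ?_⟩
  · have : CharZero E := charZero_of_injective_algebraMap (R := R[X]) (IsFractionRing.injective R[X] E)
    rw [Field.primitive_element_iff_minpoly_natDegree_eq, hmin, hfin, hFd]
  · rw [hmin]
    symm
    apply eq_of_monic_of_dvd_of_natDegree_le (minpoly.monic hθint) (hgm.map _) hdvd
    rw [hgm.natDegree_map, hfin]; exact hgd

lemma clear_denoms {A E : Type*} [CommRing A] [IsDomain A] [Field E] [Algebra A E] [IsFractionRing A E]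
    (a : E[X]) : ∃ d : A, d ≠ 0 ∧ ∃ a' : A[X], a'.map (algebraMap A E) = C (algebraMap A E d) * a := by
  obtain ⟨b, hb, hb2⟩ := IsLocalization.integerNormalization_spec (nonZeroDivisors A) a
  refine ⟨b, nonZeroDivisors.ne_zero hb, _, hb2.trans ?_⟩
  ext i
  simp [Algebra.smul_def]

lemma bezout {A E : Type*} [CommRing A] [IsDomain A] [Field E] [Algebra A E] [IsFractionRing A E]
    (p q : A[X]) (h : IsCoprime (p.map (algebraMap A E)) (q.map (algebraMap A E))) :
    ∃ d : A, d ≠ 0 ∧ ∃ U V : A[X], U * p + V * q = C d := by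
  obtain ⟨a, b, hab⟩ := h
  obtain ⟨d1, h1, a', ha⟩ := clear_denoms (A := A) a
  obtain ⟨d2, h2, b', hb⟩ := clear_denoms (A := A) b
  refine ⟨d1 * d2, mul_ne_zero h1 h2, C d2 * a', C d1 * b', ?_⟩
  apply map_injective _ (IsFractionRing.injective A E)
  simp only [Polynomial.map_add, Polynomial.map_mul, ha, hb, map_C, map_mul]
  linear_combination (C (algebraMap A E d1) * C (algebraMap A E d2)) * hab

lemma ev_C {m : ℕ} (x : Fin m → ℤ) (t : ℤ) (a : MR m) : ev x t (C a) = MvPolynomial.eval x a := by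
  simp [ev]

open Classical in
lemma fiber_bound (m : ℕ) {E M : Type*} [Field E] [Algebra (MR m)[X] E] [IsFractionRing (MR m)[X] E]
    [Field M] [Algebra E M]
    (F : (MR m)[X][X]) (hF : F.Monic) (y : M) (hy : minpoly E y = F.map (algebraMap (MR m)[X] E))
    (hy' : E⟮y⟯ = ⊤) (hint : IsIntegral E y) (hnd : ¬ Degen (MR m) E M) :
    ∃ K : ℝ, 0 ≤ K ∧ ∃ Δ : (MR m)[X], Δ ≠ 0 ∧ ∀ B : ℕ, 1 ≤ B → ∀ x ∈ nbox m B,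
      (((ibox B).filter fun t => ev x t Δ ≠ 0 ∧ ∃ z : ℤ, (F.map (ev x t)).eval z = 0).card : ℝ) ≤
        K * (√B * Real.log (B + 2)) := by
  rcases dich1 m F hF with ⟨Δ1, hΔ1, hno⟩ | ⟨q, hq⟩
  swap
  · exact absurd (degen_of_root F hF y hy hy' hint q hq) hnd
  have : CharZero E := charZero_of_injective_algebraMap (R := (MR m)[X]) (IsFractionRing.injective (MR m)[X] E)
  obtain ⟨Δ2, hΔ2, U, V, hUV⟩ : ∃ d : (MR m)[X], d ≠ 0 ∧ ∃ U V : (MR m)[X][X], U * F + V * derivative F = C d := by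
    apply bezout (E := E)
    rw [← derivative_map, ← hy]
    exact (minpoly.irreducible hint).separable
  obtain ⟨k, hk⟩ : ∃ k, ∀ j, (F.coeff j).natDegree ≤ k := by
    refine ⟨F.support.sup fun j => (F.coeff j).natDegree, fun j => ?_⟩
    by_cases hj : j ∈ F.support
    · exact Finset.le_sup (f := fun j => (F.coeff j).natDegree) hj
    · simp [notMem_support_iff.1 hj]
  obtain ⟨c, hc, hbd⟩ := bdd_all F hF
  obtain ⟨K, hK, hcc⟩ := curve_count F.natDegree k c hc
  refine ⟨K, hK, C Δ1 * Δ2, mul_ne_zero (by rwa [Ne, C_eq_zero]) hΔ2, fun B hB x hx => ?_⟩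
  by_cases hx1 : MvPolynomial.eval x Δ1 = 0
  · rw [Finset.filter_false_of_mem]
    · have := one_le_log B hB
      simp only [Finset.card_empty, Nat.cast_zero]
      positivity
    · intro t _
      rw [map_mul, ev_C, hx1]; simp
  set f := F.map (mapRingHom (MvPolynomial.eval x)) with hf
  have hft : ∀ t, f.map (evalRingHom t) = F.map (ev x t) := by
    intro t; rw [hf, map_map]; rfl
  have hft' : ∀ t, (derivative f).map (evalRingHom t) = (derivative F).map (ev x t) := by
    intro t; rw [hf, ← derivative_map, ← derivative_map, map_map]; rfl
  set T := (ibox B).filter fun t => ev x t (C Δ1 * Δ2) ≠ 0 ∧ ∃ z : ℤ, (F.map (ev x t)).eval z = 0 with hT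
  have hch : ∀ t, ∃ z : ℤ, t ∈ T → (F.map (ev x t)).eval z = 0 := by
    intro t
    by_cases ht : t ∈ T
    · obtain ⟨z, hz⟩ := (Finset.mem_filter.1 ht).2.2
      exact ⟨z, fun _ => hz⟩
    · exact ⟨0, fun h => absurd h ht⟩
  choose z hz using hch
  have := hcc B hB f (hF.map _) (hF.natDegree_map _)
    (fun j => by rw [hf, coeff_map]; exact natDegree_map_le.trans (hk j)) (hno x hx1)
    (T.image fun t => (t, z t)) (by
      intro w hw
      obtain ⟨t, ht, rfl⟩ := Finset.mem_image.1 hw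
      obtain ⟨htb, ht2, -⟩ := Finset.mem_filter.1 ht
      obtain ⟨h1, h2⟩ := hbd B hB x hx t htb (z t) (hz t ht)
      simp only [hft, hft']
      refine ⟨mem_ibox.1 htb, h1, hz t ht, ?_, h2⟩
      intro h0
      apply ht2
      have h3 := congrArg (fun p => (p.map (ev x t)).eval (z t)) hUV
      simp only [Polynomial.map_add, Polynomial.map_mul, eval_add, eval_mul, hz t ht, h0, map_C, eval_C, mul_zero,
        add_zero] at h3
      rw [map_mul, ← h3, mul_zero])
  have h4 : (T.image fun t => (t, z t)).image Prod.fst = T := by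
    rw [Finset.image_image]
    exact Finset.image_id
  rw [h4] at this
  exact this

lemma transfer {A E M : Type*} [CommRing A] [IsDomain A] [Field E] [Algebra A E] [IsFractionRing A E]
    [Field M] [Algebra E M] (F : A[X]) (hF : F.Monic) (y : M) (hy : minpoly E y = F.map (algebraMap A E))
    (hy' : E⟮y⟯ = ⊤) (hint : IsIntegral E y) (β : M) (g : A[X]) (hg : g.Monic)
    (hβ : aeval β (g.map (algebraMap A E)) = 0) :
    ∃ δ : A, δ ≠ 0 ∧ ∀ φ : A →+* ℤ, φ δ ≠ 0 → (∃ z : ℤ, (F.map φ).eval z = 0) →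
      ∃ w : ℤ, (g.map φ).eval w = 0 := by
  obtain ⟨h, hh⟩ : ∃ h : E[X], aeval y h = β := by
    have h1 : β ∈ E⟮y⟯ := by rw [hy']; exact IntermediateField.mem_top
    rw [← IntermediateField.mem_toSubalgebra, IntermediateField.adjoin_simple_toSubalgebra_of_isAlgebraic hint.isAlgebraic,
      Algebra.adjoin_singleton_eq_range_aeval] at h1
    exact h1
  obtain ⟨δ, hδ, h', hh'⟩ := clear_denoms (A := A) h
  refine ⟨δ, hδ, ?_⟩
  have hdiv : F ∣ (g.scaleRoots δ).comp h' := by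
    rw [← map_dvd_map _ (IsFractionRing.injective A E) hF, ← hy]
    apply minpoly.dvd
    rw [map_comp, aeval_comp, hh', map_mul, aeval_C, hh,
      map_scaleRoots _ _ _ (by rw [hg.leadingCoeff, map_one]; exact one_ne_zero)]
    exact scaleRoots_aeval_eq_zero hβ
  rintro φ hφ ⟨z, hz⟩
  obtain ⟨c, hc⟩ := hdiv
  set u := (h'.map φ).eval z with hu
  have h1 : ((g.map φ).scaleRoots (φ δ)).eval u = 0 := by
    rw [← map_scaleRoots _ _ _ (by rw [hg.leadingCoeff, map_one]; exact one_ne_zero), hu, ← eval_comp, ← map_comp, hc,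
      Polynomial.map_mul, eval_mul, hz, zero_mul]
  have hgm : (g.map φ).Monic := hg.map φ
  have h2 : aeval ((u : ℚ) / (φ δ : ℚ)) (g.map φ) = 0 := by
    have h3 := scaleRoots_eval₂_mul (p := g.map φ) (Int.castRingHom ℚ) ((u : ℚ) / (φ δ : ℚ)) (φ δ)
    have hφ' : (φ δ : ℚ) ≠ 0 := by exact_mod_cast hφ
    rw [eq_intCast, mul_div_cancel₀ _ hφ'] at h3
    have h4 : eval₂ (Int.castRingHom ℚ) ((u : ℤ) : ℚ) ((g.map φ).scaleRoots (φ δ)) = 0 := by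
      rw [← eq_intCast (Int.castRingHom ℚ) u, eval₂_at_apply, h1, map_zero]
    rw [h4] at h3
    have h5 := (mul_eq_zero.1 h3.symm).resolve_left (pow_ne_zero _ hφ')
    exact h5
  obtain ⟨w, hw⟩ := isInteger_of_is_root_of_monic hgm h2
  refine ⟨w, ?_⟩
  rw [← hw] at h2
  rw [aeval_algebraMap_apply] at h2
  simpa using h2

open Classical in
lemma zero_count2 (m : ℕ) (Δ : (MR m)[X]) (hΔ : Δ ≠ 0) : ∃ K : ℝ, 0 ≤ K ∧ ∀ B : ℕ, 1 ≤ B →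
    (((nbox m B ×ˢ ibox B).filter fun p => ev p.1 p.2 Δ = 0).card : ℝ) ≤ K * B ^ m := by
  set P := (MvPolynomial.finSuccEquiv ℤ m).symm Δ with hP
  have hP0 : P ≠ 0 := by
    rw [hP, Ne, EmbeddingLike.map_eq_zero_iff]; exact hΔ
  have hPΔ : MvPolynomial.finSuccEquiv ℤ m P = Δ := by rw [hP, AlgEquiv.apply_symm_apply]
  obtain ⟨K, hK, h⟩ := zero_count (m+1) P hP0
  refine ⟨K, hK, fun B hB => ?_⟩
  have hBr : (0 : ℝ) < B := by exact_mod_cast hB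
  have h1 := h B hB
  rw [pow_succ, ← mul_assoc] at h1
  refine le_trans ?_ (le_of_mul_le_mul_right h1 hBr)
  norm_cast
  apply Finset.card_le_card_of_injOn (fun p => (Fin.cons p.2 p.1 : Fin (m+1) → ℤ))
  · intro p hp
    simp only [Finset.coe_filter, Finset.mem_product, Set.mem_setOf_eq] at hp ⊢
    obtain ⟨⟨h1, h2⟩, h3⟩ := hp
    refine ⟨?_, ?_⟩
    · rw [mem_nbox] at h1 ⊢
      intro i
      refine Fin.cases ?_ (fun j => ?_) i
      · exact mem_ibox.1 h2
      · exact h1 j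
    · rw [MvPolynomial.eval_eq_eval_mv_eval', hPΔ]
      exact h3
  · rintro ⟨x, t⟩ _ ⟨x', t'⟩ _ h
    simpa [Fin.cons_inj, and_comm] using h

open Classical in
lemma count_split (m : ℕ) (P : (Fin m → ℤ) → ℤ → Prop) (W : (Fin m → ℤ) → Prop) (Δ : (MR m)[X]) (hΔ : Δ ≠ 0) :
    ∃ K : ℝ, 0 ≤ K ∧ ∀ B : ℕ, 1 ≤ B → ∀ b : ℝ, 0 ≤ b →
    (∀ x ∈ nbox m B, W x → (((ibox B).filter fun t => ev x t Δ ≠ 0 ∧ P x t).card : ℝ) ≤ b) →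
    (∀ x t, ev x t Δ ≠ 0 → P x t → W x) →
    (((nbox m B ×ˢ ibox B).filter fun p => P p.1 p.2).card : ℝ) ≤
      K * B ^ m + ((nbox m B).filter W).card * b := by
  obtain ⟨K, hK, h⟩ := zero_count2 m Δ hΔ
  refine ⟨K, hK, fun B hB b hb hfib hW => ?_⟩
  have h1 : ((nbox m B ×ˢ ibox B).filter fun p => P p.1 p.2) ⊆
      ((nbox m B ×ˢ ibox B).filter fun p => ev p.1 p.2 Δ = 0) ∪
      (((nbox m B).filter W).sigma fun x => ((ibox B).filter fun t => ev x t Δ ≠ 0 ∧ P x t)).image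
        (fun s => (s.1, s.2)) := by
    rintro ⟨x, t⟩ hp
    rw [Finset.mem_filter, Finset.mem_product] at hp
    rw [Finset.mem_union]
    by_cases h0 : ev x t Δ = 0
    · left; rw [Finset.mem_filter, Finset.mem_product]; exact ⟨hp.1, h0⟩
    · right
      rw [Finset.mem_image]
      refine ⟨⟨x, t⟩, ?_, rfl⟩
      simp only [Finset.mem_sigma, Finset.mem_filter]
      exact ⟨⟨hp.1.1, hW x t h0 hp.2⟩, hp.1.2, h0, hp.2⟩
  have h2 := (Finset.card_le_card h1).trans (Finset.card_union_le _ _)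
  have h3 : (((nbox m B ×ˢ ibox B).filter fun p => P p.1 p.2).card : ℝ) ≤
    (((nbox m B ×ˢ ibox B).filter fun p => ev p.1 p.2 Δ = 0).card : ℝ) +
    ((((nbox m B).filter W).sigma fun x => ((ibox B).filter fun t => ev x t Δ ≠ 0 ∧ P x t)).card : ℝ) := by
    exact_mod_cast h2.trans (Nat.add_le_add_left Finset.card_image_le _)
  refine h3.trans (add_le_add (h B hB) ?_)
  rw [Finset.card_sigma]
  push_cast
  rw [← nsmul_eq_mul, ← Finset.sum_const]
  apply Finset.sum_le_sum
  intro x hx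
  rw [Finset.mem_filter] at hx
  exact hfib x hx.1 hx.2

/-- algebraic numbers in `M` are rational -/
def RatAlg (M : Type*) [Field M] : Prop :=
  ∀ α : M, ∀ h : ℤ[X], h ≠ 0 → aeval α h = 0 → ∃ a b : ℤ, b ≠ 0 ∧ (b : M) * α = a

lemma zero_case {M : Type*} [Field M] [CharZero M] (hM : RatAlg M) (h : ℤ[X]) (hm : h.Monic)
    (hirr : Irreducible h) (hd : 2 ≤ h.natDegree) (y : M) (hy : aeval y h = 0) : False := by
  obtain ⟨a, b, hb, hab⟩ := hM y h hm.ne_zero hy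
  have hb' : (b : M) ≠ 0 := by exact_mod_cast hb
  have hyq : y = algebraMap ℚ M ((a : ℚ) / b) := by
    rw [map_div₀, eq_div_iff (by simpa using hb'), mul_comm]; simpa using hab
  have h1 : aeval ((a : ℚ) / b) h = 0 := by
    rw [hyq, aeval_algebraMap_apply] at hy
    exact (map_eq_zero_iff _ (algebraMap ℚ M).injective).1 hy
  obtain ⟨w, hw⟩ := isInteger_of_is_root_of_monic hm h1
  rw [← hw, aeval_algebraMap_apply] at h1
  have h2 : h.eval w = 0 := by simpa using h1
  have h3 : X - C w ∣ h := dvd_iff_isRoot.2 h2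
  obtain ⟨c, hc⟩ := h3
  rcases hirr.isUnit_or_isUnit hc with h4 | h4
  · exact not_isUnit_X_sub_C w h4
  · have h5 := congrArg natDegree hc
    rw [natDegree_mul (X_sub_C_ne_zero w) h4.ne_zero, natDegree_X_sub_C,
      natDegree_eq_zero_of_isUnit h4] at h5
    omega

lemma num_deg (a b w K1 Kg : ℝ) (B m : ℕ) (hB : 1 ≤ B) (hK1 : 0 ≤ K1) (hKg : 0 ≤ Kg)
    (h : a ≤ b) (hb : b ≤ K1 * B ^ m + w * (2 * B + 1)) (hw2 : w * √B ≤ Kg * B ^ m * Real.log (B + 2)) :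
    a * √B ≤ (K1 + 3 * Kg) * B ^ (m+1) * Real.log (B + 2) := by
  have hl := one_le_log B hB
  have hBr : (1 : ℝ) ≤ B := by exact_mod_cast hB
  have hs : √(B : ℝ) ≤ B := by
    rw [Real.sqrt_le_left (by positivity)]; nlinarith
  calc a * √B ≤ (K1 * B ^ m + w * (2 * B + 1)) * √B := by gcongr; exact h.trans hb
    _ = K1 * B ^ m * √B + (w * √B) * (2 * B + 1) := by ring
    _ ≤ K1 * B ^ m * (B * Real.log (B + 2)) + (Kg * B ^ m * Real.log (B + 2)) * (3 * B) := by
        gcongr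
        · nlinarith
        · linarith
    _ = _ := by ring

lemma num_nondeg (a b K1 K : ℝ) (B m : ℕ) (hB : 1 ≤ B) (hK1 : 0 ≤ K1) (hK : 0 ≤ K)
    (h : a ≤ b) (hb : b ≤ K1 * B ^ m + ((2 * B + 1) ^ m : ℕ) * (K * (√B * Real.log (B + 2)))) :
    a * √B ≤ (K1 + 3 ^ m * K) * B ^ (m+1) * Real.log (B + 2) := by
  have hl := one_le_log B hB
  have hBr : (1 : ℝ) ≤ B := by exact_mod_cast hB
  have hs : √(B : ℝ) ≤ B := by
    rw [Real.sqrt_le_left (by positivity)]; nlinarith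
  have hss : √(B : ℝ) * √B = B := Real.mul_self_sqrt (by positivity)
  push_cast at hb
  calc a * √B ≤ (K1 * B ^ m + (2 * B + 1) ^ m * (K * (√B * Real.log (B + 2)))) * √B := by
        gcongr; exact h.trans hb
    _ = K1 * B ^ m * √B + (2 * B + 1) ^ m * (K * ((√(B : ℝ) * √B) * Real.log (B + 2))) := by ring
    _ = K1 * B ^ m * √B + (2 * B + 1) ^ m * (K * (B * Real.log (B + 2))) := by rw [hss]
    _ ≤ K1 * B ^ m * (B * Real.log (B + 2)) + (3 * B) ^ m * (K * (B * Real.log (B + 2))) := by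
        gcongr
        · nlinarith
        · linarith
    _ = _ := by rw [mul_pow]; ring

set_option maxHeartbeats 1000000 in
open Classical in
/-- Cohen-type bound. -/
theorem thmA {M : Type*} [Field M] (hM : RatAlg M) (m : ℕ) : ∀ (ψ : MR m →+* M), Function.Injective ψ →
    ∀ (F : (MR m)[X]), F.Monic → Irreducible F → 2 ≤ F.natDegree → ∀ y : M, eval₂ ψ y F = 0 →
    ∃ K : ℝ, 0 ≤ K ∧ ∀ B : ℕ, 1 ≤ B →
      (((nbox m B).filter fun x => ∃ z : ℤ, (F.map (MvPolynomial.eval x)).eval z = 0).card : ℝ) * √B ≤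
        K * B ^ m * Real.log (B + 2) := by
  induction m with
  | zero =>
    intro ψ hψ F hF hirr hd y hy
    exfalso
    have : CharZero M := by
      have : CharZero (MR 0) := inferInstance
      exact charZero_of_injective_ringHom hψ
    let e : MR 0 ≃+* ℤ := MvPolynomial.isEmptyRingEquiv ℤ (Fin 0)
    refine zero_case hM (F.map e.toRingHom) (hF.map _) ?_ ?_ y ?_
    · have := (MulEquiv.irreducible_iff (Polynomial.mapEquiv e)).2 hirr
      exact this
    · rw [hF.natDegree_map]; exact hd
    · rw [aeval_def, eval₂_map, ← hy]
      congr 1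
      have : ψ = ((algebraMap ℤ M).comp e.toRingHom) := by
        apply MvPolynomial.ringHom_ext
        · intro r; simp
        · intro i; exact i.elim0
      exact this.symm
  | succ m ih =>
    intro ψ hψ F hF hirr hd y hy
    let e : MR (m+1) ≃+* (MR m)[X] := (MvPolynomial.finSuccEquiv ℤ m).toRingEquiv
    set F1 : (MR m)[X][X] := F.map e.toRingHom with hF1
    have hF1m : F1.Monic := hF.map _
    have hF1i : Irreducible F1 := (MulEquiv.irreducible_iff (Polynomial.mapEquiv e)).2 hirr
    let ψ1 : (MR m)[X] →+* M := ψ.comp e.symm.toRingHom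
    have hψ1 : Function.Injective ψ1 := hψ.comp e.symm.injective
    let E := FractionRing (MR m)[X]
    let : Algebra E M := (IsFractionRing.lift hψ1).toAlgebra
    have hEM : ∀ a : (MR m)[X], algebraMap E M (algebraMap (MR m)[X] E a) = ψ1 a :=
      fun a => IsFractionRing.lift_algebraMap hψ1 a
    have hyF : aeval y (F1.map (algebraMap (MR m)[X] E)) = 0 := by
      rw [aeval_def, eval₂_map, hF1, eval₂_map, ← hy]
      congr 1
      refine RingHom.ext fun a => ?_
      · change algebraMap E M (algebraMap (MR m)[X] E (e a)) = _
        rw [hEM]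
        change ψ (e.symm (e _)) = _
        rw [RingEquiv.symm_apply_apply]
    have hint : IsIntegral E y := ⟨_, hF1m.map _, hyF⟩
    have hmin : minpoly E y = F1.map (algebraMap (MR m)[X] E) := by
      symm
      apply minpoly.eq_of_irreducible_of_monic _ hyF (hF1m.map _)
      exact (hF1m.irreducible_iff_irreducible_map_fraction_map).1 hF1i
    set y0 := IntermediateField.AdjoinSimple.gen E y with hy0
    have hint0 : IsIntegral E y0 := (IntermediateField.AdjoinSimple.isIntegral_gen E y).2 hint
    have hmin0 : minpoly E y0 = F1.map (algebraMap (MR m)[X] E) := by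
      rw [hy0, IntermediateField.minpoly_gen, hmin]
    have htop0 : E⟮y0⟯ = ⊤ := by
      apply IntermediateField.lift_injective
      rw [IntermediateField.lift_adjoin_simple, IntermediateField.lift_top, hy0,
        IntermediateField.AdjoinSimple.coe_gen]
    have hev : ∀ x : Fin (m+1) → ℤ, F.map (MvPolynomial.eval x) = F1.map (ev (Fin.tail x) (x 0)) := by
      intro x
      rw [hF1, map_map]
      congr 1
      refine RingHom.ext fun a => ?_
      conv_lhs => rw [← Fin.cons_self_tail x]
      exact MvPolynomial.eval_eq_eval_mv_eval' _ _ _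
    have hpair : ∀ B, ((nbox (m+1) B).filter fun x => ∃ z : ℤ, (F.map (MvPolynomial.eval x)).eval z = 0).card ≤
        ((nbox m B ×ˢ ibox B).filter fun p => ∃ z : ℤ, (F1.map (ev p.1 p.2)).eval z = 0).card := by
      intro B
      apply Finset.card_le_card_of_injOn (fun x => (Fin.tail x, x 0))
      · intro x hx
        rw [Finset.mem_coe, Finset.mem_filter] at hx ⊢
        rw [Finset.mem_product]
        have h1 := mem_nbox.1 hx.1
        refine ⟨⟨mem_nbox.2 fun i => h1 i.succ, mem_ibox.2 (h1 0)⟩, ?_⟩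
        rw [← hev]; exact hx.2
      · intro x _ x' _ h
        rw [Prod.mk.injEq] at h
        rw [← Fin.cons_self_tail x, ← Fin.cons_self_tail x', h.1, h.2]
    by_cases hdeg : Degen (MR m) E E⟮y⟯
    · obtain ⟨θ, g, hgm, hθtop, hθmin⟩ := hdeg
      have hθint : IsIntegral E θ := by
        by_contra h
        have := minpoly.eq_zero h
        rw [hθmin] at this
        exact (hgm.map _).ne_zero this
      have hgC : (g.map C).map (algebraMap (MR m)[X] E) = minpoly E θ := by rw [map_map, hθmin]
      obtain ⟨δ, hδ, htr⟩ := transfer F1 hF1m y0 hmin0 htop0 hint0 θ (g.map C) (hgm.map _) (by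
        rw [hgC]; exact minpoly.aeval E θ)
      have hgi : Irreducible g := by
        apply hgm.irreducible_of_irreducible_map ((algebraMap (MR m)[X] E).comp C)
        rw [← hθmin]; exact minpoly.irreducible hθint
      have hgd : 2 ≤ g.natDegree := by
        have h1 := IntermediateField.adjoin.finrank hθint
        have h2 := IntermediateField.adjoin.finrank hint0
        rw [hθtop, hθmin, hgm.natDegree_map] at h1
        rw [htop0, hmin0, hF1m.natDegree_map, hF1, hF.natDegree_map] at h2
        omega
      obtain ⟨Kg, hKg, hg⟩ := ih (ψ1.comp C) (hψ1.comp C_injective) g hgm hgi hgd (θ : M) (by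
        have h1 := minpoly.aeval E θ
        rw [hθmin] at h1
        have h2 := congrArg (algebraMap E⟮y⟯ M) h1
        rw [map_zero, ← aeval_algebraMap_apply, aeval_def, eval₂_map] at h2
        rw [← h2]
        congr 1
        refine RingHom.ext fun a => ?_
        exact (hEM _).symm)
      obtain ⟨K1, hK1, hc⟩ := count_split m (fun x t => ∃ z : ℤ, (F1.map (ev x t)).eval z = 0)
        (fun x => ∃ z : ℤ, (g.map (MvPolynomial.eval x)).eval z = 0) δ hδ
      refine ⟨K1 + 3 * Kg, by positivity, fun B hB => ?_⟩
      have h1 := hc B hB (2 * B + 1) (by positivity) (by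
        intro x hx _
        have := (Finset.card_filter_le (ibox B) (fun t => ev x t δ ≠ 0 ∧ ∃ z : ℤ, (F1.map (ev x t)).eval z = 0)).trans
          (card_ibox B).le
        exact_mod_cast this) (by
        intro x t h0 h2
        obtain ⟨w, hw⟩ := htr (ev x t) h0 h2
        refine ⟨w, ?_⟩
        rw [map_map] at hw
        rw [← hw]
        congr 2
        refine RingHom.ext fun a => ?_
        exact (ev_C x t a).symm)
      have h2 := hg B hB
      have hp : (_ : ℝ) ≤ _ := Nat.cast_le.2 (hpair B)
      exact num_deg _ _ _ K1 Kg B m hB hK1 hKg hp h1 h2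
    · obtain ⟨K, hK, Δ, hΔ, hfb⟩ := fiber_bound m F1 hF1m y0 hmin0 htop0 hint0 hdeg
      obtain ⟨K1, hK1, hc⟩ := count_split m (fun x t => ∃ z : ℤ, (F1.map (ev x t)).eval z = 0)
        (fun x => True) Δ hΔ
      refine ⟨K1 + 3 ^ m * K, by positivity, fun B hB => ?_⟩
      have hl := one_le_log B hB
      have h1 := hc B hB (K * (√B * Real.log (B + 2))) (by positivity) (by
        intro x hx _
        exact hfb B hB x hx) (by simp)
      have hp : (_ : ℝ) ≤ _ := Nat.cast_le.2 (hpair B)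
      have hfT : ∀ inst : DecidablePred (fun _ : Fin m → ℤ => True),
          @Finset.filter _ (fun _ => True) inst (nbox m B) = nbox m B := by
        intro inst
        exact @Finset.filter_true_of_mem _ _ inst _ (fun _ _ => trivial)
      rw [hfT, card_nbox] at h1
      exact num_nondeg _ _ K1 K B m hB hK1 hK hp h1


lemma num_core (b w K K1 Kg : ℝ) (B m : ℕ) (hB : 1 ≤ B) (hK : 0 ≤ K) (hK1 : 0 ≤ K1)
    (hb : b ≤ K1 * B ^ m + w * (K * (√B * Real.log (B + 2))))
    (hw : w * √B ≤ Kg * B ^ m * Real.log (B + 2)) :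
    b ≤ (K1 + Kg * K) * B ^ m * Real.log (B + 2) ^ 2 := by
  have hl := one_le_log B hB
  have h2 : 1 ≤ Real.log (B + 2 : ℝ) ^ 2 := one_le_pow₀ hl
  calc b ≤ K1 * B ^ m + (w * √B) * (K * Real.log (B + 2)) := by linarith
    _ ≤ K1 * B ^ m * Real.log (B + 2) ^ 2 + (Kg * B ^ m * Real.log (B + 2)) * (K * Real.log (B + 2)) := by
        have h3 : K1 * (B:ℝ) ^ m ≤ K1 * B ^ m * Real.log (B + 2) ^ 2 :=
          le_mul_of_one_le_right (by positivity) h2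
        have h4 : (w * √B) * (K * Real.log (B + 2)) ≤
          (Kg * B ^ m * Real.log (B + 2)) * (K * Real.log (B + 2)) :=
          mul_le_mul_of_nonneg_right hw (by positivity)
        linarith
    _ = _ := by ring

open Classical in
theorem core (m : ℕ) {E M : Type*} [Field E] [Algebra (MR m)[X] E] [IsFractionRing (MR m)[X] E]
    [Field M] [Algebra E M] (hM : RatAlg M)
    (F : (MR m)[X][X]) (hF : F.Monic) (y : M) (hy : minpoly E y = F.map (algebraMap (MR m)[X] E))
    (hy' : E⟮y⟯ = ⊤) (hint : IsIntegral E y) (hnd : ¬ Degen (MR m) E M)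
    (β : M) (P : (MR m)[X]) (hP : P ≠ 0)
    (hPβ : eval₂ ((algebraMap E M).comp ((algebraMap (MR m)[X] E).comp C)) β P = 0)
    (hβ : ∀ e : E, algebraMap E M e ≠ β) :
    ∃ K : ℝ, 0 ≤ K ∧ ∀ B : ℕ, 1 ≤ B →
      (((nbox m B ×ˢ ibox B).filter fun p => ∃ z : ℤ, (F.map (ev p.1 p.2)).eval z = 0).card : ℝ) ≤
        K * B ^ m * Real.log (B + 2) ^ 2 := by
  let ρ : MR m →+* M := (algebraMap E M).comp ((algebraMap (MR m)[X] E).comp C)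
  have hρ : Function.Injective ρ :=
    (algebraMap E M).injective.comp ((IsFractionRing.injective (MR m)[X] E).comp C_injective)
  let : Algebra (MR m) M := ρ.toAlgebra
  have : FaithfulSMul (MR m) M := (faithfulSMul_iff_algebraMap_injective _ _).2 hρ
  have halg : IsAlgebraic (MR m) β := ⟨P, hP, hPβ⟩
  obtain ⟨r, hr, hrint⟩ := halg.exists_integral_multiple
  set β1 := r • β with hβ1
  set g := minpoly (MR m) β1 with hg
  have hgm : g.Monic := minpoly.monic hrint
  have hgi : Irreducible g := minpoly.irreducible hrint
  have hg0 : eval₂ ρ β1 g = 0 := minpoly.aeval (MR m) β1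
  have hgd : 2 ≤ g.natDegree := by
    rw [minpoly.two_le_natDegree_iff hrint]
    rintro ⟨s, hs⟩
    apply hβ (algebraMap (MR m)[X] E (C s) / algebraMap (MR m)[X] E (C r))
    rw [map_div₀]
    have h1 : algebraMap E M (algebraMap (MR m)[X] E (C r)) ≠ 0 := by
      change ρ r ≠ 0
      rw [Ne, map_eq_zero_iff _ hρ]; exact hr
    rw [div_eq_iff h1]
    have h2 : β1 = ρ r * β := by rw [hβ1, Algebra.smul_def]; rfl
    rw [mul_comm]
    exact hs.trans h2
  obtain ⟨Kg, hKg, hgb⟩ := thmA hM m ρ hρ g hgm hgi hgd β1 hg0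
  obtain ⟨K, hK, Δ, hΔ, hfb⟩ := fiber_bound m F hF y hy hy' hint hnd
  obtain ⟨δ, hδ, htr⟩ := transfer F hF y hy hy' hint β1 (g.map C) (hgm.map _) (by
    rw [map_map, aeval_def, eval₂_map]; exact hg0)
  obtain ⟨K1, hK1, hc⟩ := count_split m (fun x t => ∃ z : ℤ, (F.map (ev x t)).eval z = 0)
        (fun x => ∃ z : ℤ, (g.map (MvPolynomial.eval x)).eval z = 0) (Δ * δ) (mul_ne_zero hΔ hδ)
  refine ⟨K1 + Kg * K, by positivity, fun B hB => ?_⟩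
  have hl := one_le_log B hB
  refine num_core _ _ K K1 Kg B m hB hK hK1 (hc B hB (K * (√B * Real.log (B + 2))) (by positivity) ?_ ?_) (hgb B hB)
  · intro x hx _
    refine le_trans ?_ (hfb B hB x hx)
    norm_cast
    apply Finset.card_le_card
    intro t ht
    rw [Finset.mem_filter] at ht ⊢
    rw [map_mul] at ht
    exact ⟨ht.1, left_ne_zero_of_mul ht.2.1, ht.2.2⟩
  · intro x t h0 h2
    rw [map_mul] at h0
    obtain ⟨w, hw⟩ := htr (ev x t) (right_ne_zero_of_mul h0) h2
    refine ⟨w, ?_⟩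
    rw [map_map] at hw
    rw [← hw]
    congr 2
    refine RingHom.ext fun a => ?_
    exact (ev_C x t a).symm

abbrev Qb := AlgebraicClosure ℚ

def lsG {n : ℕ} {k : Type*} [CommRing k] (A : Matrix (Fin n) (Fin n) k) :
    MvPolynomial (Fin n) k →ₐ[k] MvPolynomial (Fin n) k :=
  MvPolynomial.aeval fun i => ∑ j, MvPolynomial.C (A i j) * MvPolynomial.X j

lemma lsG_comp {n : ℕ} {k : Type*} [CommRing k] (A B : Matrix (Fin n) (Fin n) k) :
    (lsG A).comp (lsG B) = lsG (B * A) := by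
  apply MvPolynomial.algHom_ext
  intro i
  simp only [lsG, AlgHom.comp_apply, MvPolynomial.aeval_X, map_sum, map_mul, MvPolynomial.aeval_C,
    Matrix.mul_apply, MvPolynomial.algebraMap_eq, Finset.sum_mul, Finset.mul_sum]
  rw [Finset.sum_comm]
  simp only [mul_assoc]

lemma lsG_one {n : ℕ} {k : Type*} [CommRing k] :
    lsG (1 : Matrix (Fin n) (Fin n) k) = AlgHom.id k _ := by
  apply MvPolynomial.algHom_ext
  intro i
  simp [lsG, Matrix.one_apply]

def lsEquiv {n : ℕ} {k : Type*} [CommRing k] (A B : Matrix (Fin n) (Fin n) k) (h1 : A * B = 1)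
    (h2 : B * A = 1) : MvPolynomial (Fin n) k ≃ₐ[k] MvPolynomial (Fin n) k :=
  AlgEquiv.ofAlgHom (lsG A) (lsG B) (by rw [lsG_comp, h2, lsG_one]) (by rw [lsG_comp, h1, lsG_one])

lemma absIrred_gl {n : ℕ} (F : Polynomial (MvPolynomial (Fin n) ℤ)) (hF : AbsIrred F)
    (σ : Matrix (Fin n) (Fin n) ℚ) (hσ : IsUnit σ.det) :
    Irreducible ((applyGL σ (toQ F)).map (MvPolynomial.map (algebraMap ℚ Qb))) := by
  let A := σ.map (algebraMap ℚ Qb)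
  let A' := σ⁻¹.map (algebraMap ℚ Qb)
  have h1 : A * A' = 1 := by
    rw [← Matrix.map_mul, Matrix.mul_nonsing_inv _ hσ]; simp
  have h2 : A' * A = 1 := by
    rw [← Matrix.map_mul, Matrix.nonsing_inv_mul _ hσ]; simp
  let e := Polynomial.mapEquiv (lsEquiv A A' h1 h2).toRingEquiv
  have : (applyGL σ (toQ F)).map (MvPolynomial.map (algebraMap ℚ Qb)) =
      e (F.map (MvPolynomial.map (Int.castRingHom Qb))) := by
    change _ = Polynomial.map _ _
    rw [applyGL, toQ, map_map, map_map, map_map]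
    congr 1
    apply MvPolynomial.ringHom_ext
    · intro r; simp
    · intro i
      simp [lsubMv, lsEquiv, lsG, A]
  rw [this, MulEquiv.irreducible_iff e]
  exact hF


lemma iota_inj (n : ℕ) : Function.Injective (MvPolynomial.map (σ := Fin n) (algebraMap ℚ Qb)) :=
  MvPolynomial.map_injective _ (algebraMap ℚ Qb).injective

abbrev RFb (n : ℕ) := FractionRing (MvPolynomial (Fin n) Qb)

def jmap (n : ℕ) : RF n →+* RFb n :=
  IsFractionRing.map (iota_inj n)

lemma jmap_alg (n : ℕ) (a : MvPolynomial (Fin n) ℚ) :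
    jmap n (algebraMap _ _ a) = algebraMap _ _ (MvPolynomial.map (algebraMap ℚ Qb) a) := by
  simp [jmap, IsFractionRing.map]

lemma irr_b {n : ℕ} (f : Polynomial (MvPolynomial (Fin n) ℚ)) (hf : f.Monic)
    (hi : Irreducible (f.map (MvPolynomial.map (algebraMap ℚ Qb)))) : Irreducible ((toFracQ f).map (jmap n)) := by
  have h := (Polynomial.Monic.irreducible_iff_irreducible_map_fraction_map (K := RFb n) (hf.map (MvPolynomial.map (algebraMap ℚ Qb)))).1 hi
  convert h using 1
  rw [toFracQ, map_map, map_map]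
  congr 1
  exact RingHom.ext fun a => jmap_alg n a

lemma irr_f {n : ℕ} (f : Polynomial (MvPolynomial (Fin n) ℚ)) (hf : f.Monic)
    (hi : Irreducible (f.map (MvPolynomial.map (algebraMap ℚ Qb)))) : Irreducible (toFracQ f) :=
  (hf.map (algebraMap _ (RF n))).irreducible_of_irreducible_map (jmap n) _ (irr_b f hf hi)

theorem ratAlg_f {n : ℕ} (f : Polynomial (MvPolynomial (Fin n) ℚ)) (hf : f.Monic)
    (hi : Irreducible (f.map (MvPolynomial.map (algebraMap ℚ Qb)))) : letI : Fact (Irreducible (toFracQ f)) := ⟨irr_f f hf hi⟩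
    RatAlg (AdjoinRoot (toFracQ f)) := by
  let : Fact (Irreducible (toFracQ f)) := ⟨irr_f f hf hi⟩
  let fb := (toFracQ f).map (jmap n)
  let : Fact (Irreducible fb) := ⟨irr_b f hf hi⟩
  have hfm : (toFracQ f).Monic := hf.map _
  have hfbm : fb.Monic := hfm.map _
  intro α h hh hα
  obtain ⟨p0, rfl⟩ := AdjoinRoot.mk_surjective α
  set p := p0 %ₘ toFracQ f with hp
  have hpp : AdjoinRoot.mk (toFracQ f) p0 = AdjoinRoot.mk (toFracQ f) p := by
    rw [AdjoinRoot.mk_eq_mk, hp]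
    conv_rhs => rw [← sub_sub_cancel p0 (p0 %ₘ toFracQ f)]
    rw [sub_sub_cancel, modByMonic_eq_sub_mul_div]
    simp
  rw [hpp] at hα ⊢
  have hpd : p.degree < (toFracQ f).degree := degree_modByMonic_lt _ hfm
  let Φ : AdjoinRoot (toFracQ f) →+* AdjoinRoot fb :=
    AdjoinRoot.lift ((AdjoinRoot.of fb).comp (jmap n)) (AdjoinRoot.root fb) (by
      rw [← eval₂_map]; exact AdjoinRoot.eval₂_root fb)
  have hΦ : ∀ q, Φ (AdjoinRoot.mk _ q) = AdjoinRoot.mk fb (q.map (jmap n)) := by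
    intro q
    rw [AdjoinRoot.lift_mk, ← eval₂_map]
    exact (AdjoinRoot.aeval_eq (f := fb) _)
  let κ : Qb →+* AdjoinRoot fb := (AdjoinRoot.of fb).comp ((algebraMap (MvPolynomial (Fin n) Qb) (RFb n)).comp MvPolynomial.C)
  let : Algebra Qb (AdjoinRoot fb) := κ.toAlgebra
  have hint : IsIntegral Qb (Φ (AdjoinRoot.mk _ p)) := by
    rw [← isAlgebraic_iff_isIntegral]
    refine ⟨h.map (Int.castRingHom Qb), ?_, ?_⟩
    · exact (Polynomial.map_ne_zero_iff (Int.cast_injective)).2 hh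
    · have hα' : eval₂ (Int.castRingHom _) (AdjoinRoot.mk (toFracQ f) p) h = 0 := hα
      have := congrArg Φ hα'
      rw [map_zero, hom_eval₂] at this
      rw [aeval_def, eval₂_map, ← this]
      congr 1
      exact RingHom.ext_int _ _
  obtain ⟨c, hc⟩ := minpoly.mem_range_of_degree_eq_one Qb _
    (IsAlgClosed.degree_eq_one_of_irreducible Qb (minpoly.irreducible hint))
  have hc' : AdjoinRoot.mk fb (C (algebraMap (MvPolynomial (Fin n) Qb) (RFb n) (MvPolynomial.C c))) = AdjoinRoot.mk fb (p.map (jmap n)) := by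
    rw [← hΦ, ← hc]; rfl
  have hpos : 0 < fb.degree := degree_pos_of_irreducible (irr_b f hf hi)
  have heq : p.map (jmap n) = C (algebraMap (MvPolynomial (Fin n) Qb) (RFb n) (MvPolynomial.C c)) := by
    rw [AdjoinRoot.mk_eq_mk, ← dvd_neg, neg_sub] at hc'
    rw [← sub_eq_zero]
    apply eq_zero_of_dvd_of_degree_lt hc'
    apply lt_of_le_of_lt (degree_sub_le _ _)
    rw [max_lt_iff]
    constructor
    · rw [degree_map, degree_map]; exact hpd
    · exact degree_C_le.trans_lt hpos
  have hp0 : p = C (p.coeff 0) := by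
    apply eq_C_of_degree_le_zero
    rw [← degree_map p (jmap n), heq]
    exact degree_C_le
  set e := p.coeff 0 with he
  have hje : jmap n e = algebraMap (MvPolynomial (Fin n) Qb) (RFb n) (MvPolynomial.C c) := by
    rw [hp0, map_C] at heq
    exact C_injective heq
  obtain ⟨a, b, hb, hab⟩ := IsFractionRing.div_surjective (A := MvPolynomial (Fin n) ℚ) e
  have hb0 : b ≠ 0 := nonZeroDivisors.ne_zero hb
  have hbR : algebraMap _ (RF n) b ≠ 0 := by
    rw [Ne, map_eq_zero_iff _ (IsFractionRing.injective _ _)]; exact hb0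
  have hab' : algebraMap _ (RF n) a = e * algebraMap _ (RF n) b := by
    rw [← hab, div_mul_cancel₀ _ hbR]
  have h1 : MvPolynomial.map (algebraMap ℚ Qb) a = MvPolynomial.C c * MvPolynomial.map (algebraMap ℚ Qb) b := by
    apply IsFractionRing.injective (MvPolynomial (Fin n) Qb) (RFb n)
    rw [map_mul, ← jmap_alg, ← jmap_alg, ← hje, ← map_mul, hab']
  obtain ⟨m, hm⟩ := MvPolynomial.ne_zero_iff.1 hb0
  have h2 := congrArg (MvPolynomial.coeff m) h1
  rw [MvPolynomial.coeff_C_mul, MvPolynomial.coeff_map, MvPolynomial.coeff_map] at h2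
  have hm' : algebraMap ℚ Qb (MvPolynomial.coeff m b) ≠ 0 := by
    rw [Ne, map_eq_zero]; exact hm
  set q : ℚ := MvPolynomial.coeff m a / MvPolynomial.coeff m b with hq
  have hcq : c = algebraMap ℚ Qb q := by
    rw [hq, map_div₀, h2, mul_div_cancel_right₀ _ hm']
  have h3 : a = MvPolynomial.C q * b := by
    apply iota_inj n
    rw [h1, map_mul, MvPolynomial.map_C, hcq]
  have h4 : e = algebraMap (MvPolynomial (Fin n) ℚ) (RF n) (MvPolynomial.C q) := by
    rw [← hab, h3, map_mul, mul_div_cancel_right₀ _ hbR]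
  refine ⟨q.num, q.den, by exact_mod_cast q.den_nz, ?_⟩
  rw [hp0, h4, AdjoinRoot.mk_C]
  let τ : ℚ →+* AdjoinRoot (toFracQ f) := (AdjoinRoot.of (toFracQ f)).comp ((algebraMap (MvPolynomial (Fin n) ℚ) (RF n)).comp MvPolynomial.C)
  have h5 : (q.den : ℚ) * q = q.num := by rw [mul_comm]; exact Rat.mul_den_eq_num q
  have h6 := congrArg τ h5
  rw [map_mul, map_natCast, map_intCast] at h6
  exact_mod_cast h6

/-- rescaled coordinates, in `m + 1` variables, with the variable `i` singled out -/
def psiC (m : ℕ) (i : Fin (m+1)) (N : ℤ) : MR m →+* MR (m+1) :=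
  (MvPolynomial.aeval (R := ℤ) fun j => MvPolynomial.C N * MvPolynomial.X (i.succAbove j)).toRingHom

def mvQ (n : ℕ) : MR n →+* MvPolynomial (Fin n) ℚ := MvPolynomial.map (Int.castRingHom ℚ)

def psi (m : ℕ) (i : Fin (m+1)) (N : ℤ) : (MR m)[X] →+* MvPolynomial (Fin (m+1)) ℚ :=
  eval₂RingHom ((mvQ (m+1)).comp (psiC m i N)) (MvPolynomial.C (N : ℚ) * MvPolynomial.X i)

lemma psi_C (m : ℕ) (i : Fin (m+1)) (N : ℤ) (a : MR m) : psi m i N (C a) = mvQ (m+1) (psiC m i N a) := by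
  simp [psi]

lemma psi_X (m : ℕ) (i : Fin (m+1)) (N : ℤ) : psi m i N X = MvPolynomial.C (N : ℚ) * MvPolynomial.X i := by
  simp [psi]

lemma psiC_X (m : ℕ) (i : Fin (m+1)) (N : ℤ) (j) : psiC m i N (MvPolynomial.X j) =
    MvPolynomial.C N * MvPolynomial.X (i.succAbove j) := by
  simp [psiC]

lemma psiC_C (m : ℕ) (i : Fin (m+1)) (N : ℤ) (c) : psiC m i N (MvPolynomial.C c) = MvPolynomial.C c := by
  simp [psiC]

lemma mvQ_C (n : ℕ) (c) : mvQ n (MvPolynomial.C c) = MvPolynomial.C (c : ℚ) := by simp [mvQ]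
lemma mvQ_X (n : ℕ) (c) : mvQ n (MvPolynomial.X c) = MvPolynomial.X c := by simp [mvQ]

lemma psi_injective (m : ℕ) (i : Fin (m+1)) (N : ℤ) (hN : N ≠ 0) : Function.Injective (psi m i N) := by
  let inv : MvPolynomial (Fin (m+1)) ℚ →+* (MvPolynomial (Fin m) ℚ)[X] :=
    (MvPolynomial.aeval (R := ℚ) (Fin.insertNth i (C (MvPolynomial.C (N : ℚ)⁻¹) * X)
      (fun j => C (MvPolynomial.C (N : ℚ)⁻¹ * MvPolynomial.X j)) : Fin (m+1) → _)).toRingHom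
  have hN' : (N : ℚ) ≠ 0 := by exact_mod_cast hN
  have hNC : (N : (MvPolynomial (Fin m) ℚ)[X]) * C (MvPolynomial.C (N : ℚ)⁻¹) = 1 := by
    have h : (N : (MvPolynomial (Fin m) ℚ)[X]) = C (MvPolynomial.C (N : ℚ)) := by simp
    rw [h, ← C_mul, ← MvPolynomial.C_mul, mul_inv_cancel₀ hN']
    simp
  have h : inv.comp (psi m i N) = mapRingHom (mvQ m) := by
    have hc : ∀ c : ℚ, inv (MvPolynomial.C c) = C (MvPolynomial.C c) := by
      intro c; simp [inv]
    apply Polynomial.ringHom_ext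
    · intro a
      have : (inv.comp (psi m i N)).comp C = (mapRingHom (mvQ m)).comp C := by
        apply MvPolynomial.ringHom_ext
        · intro r
          simp only [RingHom.comp_apply, psi_C, psiC_C, mvQ_C, hc, coe_mapRingHom, map_C]
        · intro j
          simp only [RingHom.comp_apply, psi_C, psiC_X, mvQ_C, mvQ_X, hc, coe_mapRingHom, map_C, map_mul]
          simp [inv]
          rw [← mul_assoc, hNC, one_mul]
      exact RingHom.congr_fun this a
    · simp only [RingHom.comp_apply, psi_X, map_mul, hc]
      simp [inv]
      rw [← mul_assoc, hNC, one_mul]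
  have h2 : Function.Injective (inv.comp (psi m i N)) := by
    rw [h]
    exact Polynomial.map_injective _ (MvPolynomial.map_injective _ Int.cast_injective)
  rw [RingHom.coe_comp] at h2
  exact Function.Injective.of_comp h2

lemma psi_clear (m : ℕ) (i : Fin (m+1)) (N : ℤ) (hN : N ≠ 0) (a : MvPolynomial (Fin (m+1)) ℚ) :
    ∃ d : ℤ, d ≠ 0 ∧ ∃ A, psi m i N A = MvPolynomial.C (d : ℚ) * a := by
  induction a using MvPolynomial.induction_on with
  | C q =>
    refine ⟨q.den, by exact_mod_cast q.den_nz, C (MvPolynomial.C q.num), ?_⟩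
    rw [psi_C, psiC_C, mvQ_C, ← MvPolynomial.C_mul]
    congr 1
    rw [mul_comm]; exact (Rat.mul_den_eq_num q).symm
  | add p q hp hq =>
    obtain ⟨d, hd, A, hA⟩ := hp
    obtain ⟨d', hd', A', hA'⟩ := hq
    refine ⟨d * d', mul_ne_zero hd hd', C (MvPolynomial.C d') * A + C (MvPolynomial.C d) * A', ?_⟩
    rw [map_add, map_mul, map_mul, hA, hA', psi_C, psiC_C, mvQ_C, psi_C, psiC_C, mvQ_C]
    push_cast; rw [MvPolynomial.C_mul]; ring
  | mul_X p j hp =>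
    obtain ⟨d, hd, A, hA⟩ := hp
    rcases Fin.eq_self_or_eq_succAbove i j with rfl | ⟨k, rfl⟩
    · refine ⟨d * N, mul_ne_zero hd hN, A * X, ?_⟩
      rw [map_mul, hA, psi_X]; push_cast; rw [MvPolynomial.C_mul]; ring
    · refine ⟨d * N, mul_ne_zero hd hN, A * C (MvPolynomial.X k), ?_⟩
      rw [map_mul, hA, psi_C, psiC_X, map_mul, mvQ_C, mvQ_X]; push_cast; rw [MvPolynomial.C_mul]; ring

lemma psi_clear0 (m : ℕ) (i : Fin (m+1)) (N : ℤ) (hN : N ≠ 0) (a : MR (m+1)) (ha : a.degreeOf i = 0) :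
    ∃ d : ℤ, d ≠ 0 ∧ ∃ A, psiC m i N A = MvPolynomial.C d * a := by
  have hs : a ∈ MvPolynomial.supported ℤ ({i}ᶜ : Set (Fin (m+1))) := by
    rw [MvPolynomial.mem_supported]
    intro j hj
    rw [Set.mem_compl_singleton_iff]
    rintro rfl
    rw [MvPolynomial.degreeOf_def, Multiset.count_eq_zero] at ha
    rw [Finset.mem_coe, MvPolynomial.vars_def, Multiset.mem_toFinset] at hj
    exact ha hj
  rw [MvPolynomial.supported] at hs
  clear ha
  induction hs using Algebra.adjoin_induction with
  | mem x hx =>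
    obtain ⟨j, hj, rfl⟩ := hx
    rcases Fin.eq_self_or_eq_succAbove i j with rfl | ⟨k, rfl⟩
    · exact absurd rfl hj
    · exact ⟨N, hN, MvPolynomial.X k, psiC_X _ _ _ _⟩
  | algebraMap r => exact ⟨1, one_ne_zero, MvPolynomial.C r, by rw [psiC_C]; simp⟩
  | add x y hx hy h1 h2 =>
    obtain ⟨d, hd, A, hA⟩ := h1
    obtain ⟨d', hd', A', hA'⟩ := h2
    refine ⟨d * d', mul_ne_zero hd hd', MvPolynomial.C d' * A + MvPolynomial.C d * A', ?_⟩
    rw [map_add, map_mul, map_mul, hA, hA', psiC_C, psiC_C, MvPolynomial.C_mul]; ring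
  | mul x y hx hy h1 h2 =>
    obtain ⟨d, hd, A, hA⟩ := h1
    obtain ⟨d', hd', A', hA'⟩ := h2
    refine ⟨d * d', mul_ne_zero hd hd', A * A', ?_⟩
    rw [map_mul, hA, hA', MvPolynomial.C_mul]; ring

lemma psiC_degreeOf (m : ℕ) (i : Fin (m+1)) (N : ℤ) (a : MR m) : (psiC m i N a).degreeOf i = 0 := by
  have h : psiC m i N a ∈ MvPolynomial.supported ℤ ({i}ᶜ : Set (Fin (m+1))) := by
    induction a using MvPolynomial.induction_on with
    | C q => rw [psiC_C]; exact Subalgebra.algebraMap_mem _ q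
    | add p q hp hq => rw [map_add]; exact add_mem hp hq
    | mul_X p j hp =>
      rw [map_mul, psiC_X]
      refine mul_mem hp (mul_mem (Subalgebra.algebraMap_mem _ N) ?_)
      rw [MvPolynomial.X_mem_supported]
      exact Fin.succAbove_ne i j
  rw [MvPolynomial.mem_supported] at h
  by_contra h0
  have : i ∈ (psiC m i N a).vars := by
    rw [MvPolynomial.vars_def]
    rw [MvPolynomial.degreeOf_def] at h0
    rw [Multiset.mem_toFinset]
    exact Multiset.count_ne_zero.1 h0
  exact h this rfl

/-- a family of integer denominators can be made common -/
lemma lift_scaled {R S : Type*} [CommRing R] [CommRing S] (φ : R →+* S) (p : S[X])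
    (h : ∀ k, ∃ d : ℤ, d ≠ 0 ∧ ∃ A, φ A = (d : S) * p.coeff k) :
    ∃ d : ℤ, d ≠ 0 ∧ ∃ P : R[X], P.map φ = C (d : S) * p := by
  choose d hd A hA using h
  refine ⟨∏ k ∈ p.support, d k, Finset.prod_ne_zero_iff.2 fun k _ => hd k, ?_⟩
  have : C (((∏ k ∈ p.support, d k : ℤ)) : S) * p ∈ lifts φ := by
    rw [lifts_iff_coeff_lifts]
    intro k
    rw [coeff_C_mul]
    by_cases hk : k ∈ p.support
    · refine ⟨((∏ j ∈ p.support.erase k, d j : ℤ) : R) * A k, ?_⟩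
      rw [map_mul, hA, map_intCast, ← Finset.mul_prod_erase _ _ hk]
      push_cast; ring
    · refine ⟨0, ?_⟩
      rw [notMem_support_iff.1 hk]; simp
  exact (mem_lifts _).1 this

lemma lift_monic {R S : Type*} [CommRing R] [CommRing S] (φ : R →+* S) (p : S[X]) (hp : p.Monic)
    (h : ∀ k, ∃ d : ℤ, d ≠ 0 ∧ ∃ A, φ A = (d : S) * p.coeff k) :
    ∃ d : ℤ, d ≠ 0 ∧ ∃ P : R[X], P.Monic ∧ P.map φ = p.scaleRoots (d : S) := by
  obtain ⟨d, hd, P, hP⟩ := lift_scaled φ p h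
  refine ⟨d, hd, ?_⟩
  have hm : (p.scaleRoots (d : S)).Monic := (monic_scaleRoots_iff _).2 hp
  have : p.scaleRoots (d : S) ∈ lifts φ := by
    rw [lifts_iff_coeff_lifts]
    intro k
    rw [coeff_scaleRoots]
    rcases lt_trichotomy k p.natDegree with hk | hk | hk
    · refine ⟨P.coeff k * (d : R) ^ (p.natDegree - k - 1), ?_⟩
      rw [map_mul, ← coeff_map, hP, coeff_C_mul, map_pow, map_intCast]
      obtain ⟨j, hj⟩ : ∃ j, p.natDegree - k = j + 1 := ⟨p.natDegree - k - 1, by omega⟩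
      rw [hj, Nat.add_sub_cancel]; ring
    · refine ⟨1, ?_⟩
      rw [hk, hp.coeff_natDegree]; simp
    · refine ⟨0, ?_⟩
      rw [coeff_eq_zero_of_natDegree_lt hk]; simp
  by_cases hS : Nontrivial S
  · obtain ⟨q, hq, _, hqm⟩ := lifts_and_natDegree_eq_and_monic this hm
    exact ⟨q, hqm, hq⟩
  · rw [not_nontrivial_iff_subsingleton] at hS
    exact ⟨1, monic_one, Subsingleton.elim _ _⟩

set_option maxHeartbeats 4000000 in
set_option synthInstance.maxHeartbeats 400000 in
open Classical in
theorem wrap_alg (m : ℕ) (f : Polynomial (MvPolynomial (Fin (m+1)) ℚ)) (hf : f.Monic)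
    (hi : Irreducible (f.map (MvPolynomial.map (algebraMap ℚ Qb)))) (i : Fin (m+1)) (N : ℤ) (hN : N ≠ 0)
    (hgen : GenuineExtOfQ f) (M : Type) [Field M] [Algebra (RF (m+1)) M]
    (e : AdjoinRoot (toFracQ f) ≃ₐ[RF (m+1)] M) (M' : IntermediateField (RF (m+1)) M) (hM' : M' ≠ ⊥)
    (G : Polynomial (MvPolynomial (Fin (m+1)) ℤ)) (hG : Irreducible (toFrac G))
    (e' : AdjoinRoot (toFrac G) ≃ₐ[RF (m+1)] M') (hGi : degX G i = 0) :
    ∃ d : ℤ, d ≠ 0 ∧ ∃ P : (MR m)[X][X], P.map (psi m i N) = f.scaleRoots (d : MvPolynomial (Fin (m+1)) ℚ) ∧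
    ∃ K : ℝ, 0 ≤ K ∧ ∀ B : ℕ, 1 ≤ B →
      (((nbox m B ×ˢ ibox B).filter fun p => ∃ z : ℤ, (P.map (ev p.1 p.2)).eval z = 0).card : ℝ) ≤
        K * B ^ m * Real.log (B + 2) ^ 2 := by
  let : Fact (Irreducible (toFracQ f)) := ⟨irr_f f hf hi⟩
  let : Fact (Irreducible (toFrac G)) := ⟨hG⟩
  have hRat : RatAlg (AdjoinRoot (toFracQ f)) := ratAlg_f f hf hi
  let ψ := psi m i N
  have hψ : Function.Injective ψ := psi_injective m i N hN
  let : Algebra (MR m)[X] (RF (m+1)) := ((algebraMap (MvPolynomial (Fin (m+1)) ℚ) (RF (m+1))).comp ψ).toAlgebra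
  have halg : ∀ a, algebraMap (MR m)[X] (RF (m+1)) a = algebraMap (MvPolynomial (Fin (m+1)) ℚ) (RF (m+1)) (ψ a) :=
    fun _ => rfl
  have hinj : Function.Injective (algebraMap (MR m)[X] (RF (m+1))) :=
    (IsFractionRing.injective (MvPolynomial (Fin (m+1)) ℚ) (RF (m+1))).comp hψ
  have : FaithfulSMul (MR m)[X] (RF (m+1)) := (faithfulSMul_iff_algebraMap_injective _ _).2 hinj
  have hfrac : IsFractionRing (MR m)[X] (RF (m+1)) := by
    apply IsFractionRing.of_field
    intro z
    obtain ⟨a, b, hb, rfl⟩ := IsFractionRing.div_surjective (A := MvPolynomial (Fin (m+1)) ℚ) z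
    obtain ⟨d, hd, A, hA⟩ := psi_clear m i N hN a
    obtain ⟨d', hd', A', hA'⟩ := psi_clear m i N hN b
    refine ⟨A * C (MvPolynomial.C d'), A' * C (MvPolynomial.C d), ?_⟩
    have hc : ∀ c : ℤ, ψ (C (MvPolynomial.C c)) = MvPolynomial.C (c : ℚ) := by
      intro c
      change psi m i N _ = _
      rw [psi_C, psiC_C, mvQ_C]
    have hne : ∀ c : ℤ, c ≠ 0 → algebraMap (MvPolynomial (Fin (m+1)) ℚ) (RF (m+1)) (MvPolynomial.C (c : ℚ)) ≠ 0 := by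
      intro c hc
      rw [Ne, map_eq_zero_iff _ (IsFractionRing.injective _ _), MvPolynomial.C_eq_zero]
      exact_mod_cast hc
    have hb0 : algebraMap (MvPolynomial (Fin (m+1)) ℚ) (RF (m+1)) b ≠ 0 := by
      rw [Ne, map_eq_zero_iff _ (IsFractionRing.injective _ _)]
      exact nonZeroDivisors.ne_zero hb
    have hA1 : ψ A = MvPolynomial.C (d : ℚ) * a := hA
    have hA2 : ψ A' = MvPolynomial.C (d' : ℚ) * b := hA'
    simp only [halg, map_mul, hc, hA1, hA2]
    have h1 := hne d hd
    have h2 := hne d' hd'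
    field_simp
  obtain ⟨d, hd, P, hPm, hP⟩ := lift_monic ψ f hf (by
    intro k
    obtain ⟨d, hd, A, hA⟩ := psi_clear m i N hN (f.coeff k)
    refine ⟨d, hd, A, ?_⟩
    change psi m i N A = _
    rw [hA]; simp)
  refine ⟨d, hd, P, hP, ?_⟩
  have hfm : (toFracQ f).Monic := hf.map _
  have hPE : P.map (algebraMap (MR m)[X] (RF (m+1))) = (toFracQ f).scaleRoots (d : RF (m+1)) := by
    have : algebraMap (MR m)[X] (RF (m+1)) = (algebraMap (MvPolynomial (Fin (m+1)) ℚ) (RF (m+1))).comp ψ := rfl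
    rw [this, ← map_map, hP, map_scaleRoots _ _ _ (by rw [hf.leadingCoeff, map_one]; exact one_ne_zero), map_intCast, toFracQ]
  have : CharZero (RF (m+1)) := algebraRat.charZero _
  have hdE : (d : RF (m+1)) ≠ 0 := by exact_mod_cast hd
  let y : AdjoinRoot (toFracQ f) := algebraMap (RF (m+1)) _ (d : RF (m+1)) * AdjoinRoot.root (toFracQ f)
  have hy0 : aeval y ((toFracQ f).scaleRoots (d : RF (m+1))) = 0 :=
    scaleRoots_aeval_eq_zero (by rw [AdjoinRoot.aeval_eq, AdjoinRoot.mk_self])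
  have hint : IsIntegral (RF (m+1)) y := ⟨_, (monic_scaleRoots_iff _).2 hfm, hy0⟩
  have hytop : (RF (m+1))⟮y⟯ = ⊤ := by
    rw [eq_top_iff, ← IntermediateField.adjoin_root_eq_top, IntermediateField.adjoin_simple_le_iff]
    have h1 : AdjoinRoot.root (toFracQ f) = algebraMap (RF (m+1)) _ (d : RF (m+1))⁻¹ * y := by
      simp only [y]
      rw [← mul_assoc, ← map_mul, inv_mul_cancel₀ hdE, map_one, one_mul]
    rw [h1]
    exact mul_mem (IntermediateField.algebraMap_mem _ _) (IntermediateField.mem_adjoin_simple_self _ _)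
  have hymin : minpoly (RF (m+1)) y = P.map (algebraMap (MR m)[X] (RF (m+1))) := by
    rw [hPE]
    symm
    apply eq_of_monic_of_dvd_of_natDegree_le (minpoly.monic hint) ((monic_scaleRoots_iff _).2 hfm)
      (minpoly.dvd _ _ hy0)
    have h1 := IntermediateField.adjoin.finrank hint
    rw [hytop, IntermediateField.finrank_top'] at h1
    rw [← h1, natDegree_scaleRoots, (AdjoinRoot.powerBasis hfm.ne_zero).finrank, AdjoinRoot.powerBasis_dim]
  have hnd : ¬ Degen (MR m) (RF (m+1)) (AdjoinRoot (toFracQ f)) := by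
    rintro ⟨θ, g, hgm, hθtop, hθmin⟩
    have hθint : IsIntegral (RF (m+1)) θ := by
      by_contra h
      have := minpoly.eq_zero h
      rw [hθmin] at this
      exact (hgm.map _).ne_zero this
    let G' : (MR (m+1))[X] := g.map (psiC m i N)
    have hG' : toFrac G' = minpoly (RF (m+1)) θ := by
      rw [hθmin, toFrac, toFracQ, toQ, map_map, map_map]
      congr 1
      refine RingHom.ext fun a => ?_
      simp only [RingHom.comp_apply, halg]
      congr 1
      exact (psi_C m i N a).symm
    have hpos := hgen G' (by rw [hG']; exact minpoly.irreducible hθint) ⟨by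
      rw [hG']
      exact (IntermediateField.adjoinRootEquivAdjoin _ hθint).trans
        ((IntermediateField.equivOfEq hθtop).trans IntermediateField.topEquiv)⟩
    have h0 : degX G' i = 0 := by
      rw [degX, ← Nat.le_zero]
      apply Finset.sup_le
      intro k _
      rw [coeff_map, psiC_degreeOf]
    have := hpos.2 i
    omega
  let r : M' := e' (AdjoinRoot.root (toFrac G))
  let β : AdjoinRoot (toFracQ f) := e.symm (r : M)
  have hβ0 : aeval β (toFrac G) = 0 := by
    have h1 : aeval (AdjoinRoot.root (toFrac G)) (toFrac G) = 0 := by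
      rw [AdjoinRoot.aeval_eq, AdjoinRoot.mk_self]
    have h2 : aeval r (toFrac G) = 0 := by
      have := aeval_algHom_apply e'.toAlgHom (AdjoinRoot.root (toFrac G)) (toFrac G)
      rw [h1, map_zero] at this
      exact this
    have h3 : aeval (r : M) (toFrac G) = 0 := by
      have := aeval_algHom_apply M'.val r (toFrac G)
      rw [h2, map_zero] at this
      exact this
    have := aeval_algHom_apply e.symm.toAlgHom (r : M) (toFrac G)
    rw [h3, map_zero] at this
    exact this
  have hβ : ∀ a : RF (m+1), algebraMap (RF (m+1)) (AdjoinRoot (toFracQ f)) a ≠ β := by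
    intro a ha
    have h1 : (r : M) = algebraMap _ _ a := by
      have := congrArg e ha
      rw [AlgEquiv.commutes, AlgEquiv.apply_symm_apply] at this
      exact this.symm
    have h2 : r = algebraMap (RF (m+1)) M' a := Subtype.ext h1
    have h3 : AdjoinRoot.root (toFrac G) = algebraMap (RF (m+1)) _ a := by
      apply e'.injective
      rw [AlgEquiv.commutes]; exact h2
    apply hM'
    have h4 : (⊤ : IntermediateField (RF (m+1)) (AdjoinRoot (toFrac G))) = ⊥ := by
      rw [← IntermediateField.adjoin_root_eq_top, IntermediateField.adjoin_simple_eq_bot_iff, h3]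
      exact IntermediateField.algebraMap_mem _ _
    rw [eq_bot_iff]
    intro x hx
    have h5 : e'.symm ⟨x, hx⟩ ∈ (⊥ : IntermediateField (RF (m+1)) (AdjoinRoot (toFrac G))) := by
      rw [← h4]; exact IntermediateField.mem_top
    obtain ⟨b, hb⟩ := IntermediateField.mem_bot.1 h5
    rw [IntermediateField.mem_bot]
    refine ⟨b, ?_⟩
    have h6 := congrArg e' hb
    rw [AlgEquiv.commutes, AlgEquiv.apply_symm_apply] at h6
    exact congrArg Subtype.val h6
  obtain ⟨d', hd', Q, hQ⟩ := lift_scaled (psiC m i N) G (by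
    intro k
    have hk : (G.coeff k).degreeOf i = 0 := by
      by_cases h : k ∈ G.support
      · have := Finset.le_sup (f := fun k => (G.coeff k).degreeOf i) h
        rw [degX] at hGi
        rw [hGi] at this
        exact Nat.le_zero.1 this
      · rw [notMem_support_iff.1 h, MvPolynomial.degreeOf_zero]
    obtain ⟨d, hd, A, hA⟩ := psi_clear0 m i N hN (G.coeff k) hk
    exact ⟨d, hd, A, by rw [hA]; simp⟩)
  have hG0 : G ≠ 0 := by
    rintro rfl
    apply hG.ne_zero
    simp [toFrac, toFracQ, toQ]
  apply core m hRat P hPm y hymin hytop hint hnd β Q _ _ hβ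
  · rintro rfl
    rw [Polynomial.map_zero] at hQ
    symm at hQ
    rw [mul_eq_zero, C_eq_zero] at hQ
    rcases hQ with h | h
    · exact hd' (by exact_mod_cast h)
    · exact hG0 h
  · have h1 : eval₂ ((algebraMap (RF (m+1)) (AdjoinRoot (toFracQ f))).comp
        ((algebraMap (MvPolynomial (Fin (m+1)) ℚ) (RF (m+1))).comp (mvQ (m+1)))) β (Q.map (psiC m i N)) = 0 := by
      rw [hQ, eval₂_mul]
      have h2 : eval₂ ((algebraMap (RF (m+1)) (AdjoinRoot (toFracQ f))).comp
        ((algebraMap (MvPolynomial (Fin (m+1)) ℚ) (RF (m+1))).comp (mvQ (m+1)))) β G = 0 := by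
        have h3 : toFrac G = G.map ((algebraMap (MvPolynomial (Fin (m+1)) ℚ) (RF (m+1))).comp (mvQ (m+1))) := by
          rw [toFrac, toFracQ, toQ, map_map, mvQ]
        rw [h3, aeval_def, eval₂_map] at hβ0
        exact hβ0
      rw [h2, mul_zero]
    rw [← h1, eval₂_map]
    congr 1
    refine RingHom.ext fun a => ?_
    simp only [RingHom.comp_apply, halg]
    congr 2
    exact psi_C m i N a

/-- evaluation of `psi` at rescaled integer points -/
lemma eval_psi (m : ℕ) (i : Fin (m+1)) (N : ℤ) (z : Fin (m+1) → ℚ) (w : Fin (m+1) → ℤ)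
    (hw : ∀ k, (w k : ℚ) = N * z k) :
    (MvPolynomial.eval z).comp (psi m i N) =
      (Int.castRingHom ℚ).comp (ev (fun j => w (i.succAbove j)) (w i)) := by
  apply Polynomial.ringHom_ext
  · intro a
    have : ((MvPolynomial.eval z).comp (psi m i N)).comp C =
      ((Int.castRingHom ℚ).comp (ev (fun j => w (i.succAbove j)) (w i))).comp C := by
      apply MvPolynomial.ringHom_ext
      · intro r
        simp only [RingHom.comp_apply, psi_C, psiC_C, mvQ_C, ev_C, MvPolynomial.eval_C]
        rfl
      · intro j
        simp only [RingHom.comp_apply, psi_C, psiC_X, map_mul, mvQ_C, mvQ_X, ev_C, MvPolynomial.eval_C,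
          MvPolynomial.eval_X]
        exact (hw _).symm
    exact RingHom.congr_fun this a
  · simp only [RingHom.comp_apply, psi_X, map_mul, MvPolynomial.eval_C, MvPolynomial.eval_X]
    rw [← hw]
    simp [ev]

lemma eval_lsub (n : ℕ) (σ : Matrix (Fin n) (Fin n) ℚ) (z : Fin n → ℚ) (x : Fin n → ℤ)
    (hx : ∀ k, (x k : ℚ) = ∑ j, σ k j * z j) :
    ((MvPolynomial.eval z).comp (lsubMv σ)).comp (MvPolynomial.map (Int.castRingHom ℚ)) =
      (Int.castRingHom ℚ).comp (MvPolynomial.eval x) := by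
  apply MvPolynomial.ringHom_ext
  · intro r
    simp [lsubMv]
  · intro j
    simp [lsubMv, hx]

lemma root_transfer (m : ℕ) (F : Polynomial (MvPolynomial (Fin (m+1)) ℤ)) (hF : F.Monic)
    (σ : Matrix (Fin (m+1)) (Fin (m+1)) ℚ) (i : Fin (m+1)) (N : ℤ) (d : ℤ) (P : (MR m)[X][X])
    (hP : P.map (psi m i N) = (applyGL σ (toQ F)).scaleRoots (d : MvPolynomial (Fin (m+1)) ℚ))
    (z : Fin (m+1) → ℚ) (w : Fin (m+1) → ℤ)
    (hw : ∀ k, (w k : ℚ) = N * z k) (x : Fin (m+1) → ℤ)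
    (hx : ∀ k, (x k : ℚ) = ∑ j, σ k j * z j)
    (y : ℤ) (hy : (F.map (MvPolynomial.eval x)).eval y = 0) :
    (P.map (ev (fun j => w (i.succAbove j)) (w i))).eval (d * y) = 0 := by
  have hfm : (applyGL σ (toQ F)).Monic := (hF.map _).map _
  have h1 := congrArg (Polynomial.map (MvPolynomial.eval z)) hP
  rw [map_map, eval_psi m i N z w hw,
    map_scaleRoots _ _ _ (by rw [hfm.leadingCoeff, map_one]; exact one_ne_zero), map_intCast,
    applyGL, toQ, map_map, map_map, eval_lsub _ σ z x hx, ← map_map, ← map_map] at h1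
  have h2 : ((F.map (MvPolynomial.eval x)).map (Int.castRingHom ℚ)).eval (y : ℚ) = 0 := by
    have := congrArg (Int.castRingHom ℚ) hy
    rw [map_zero] at this
    rw [← this]
    exact eval_intCast_map (Int.castRingHom ℚ) _ y
  have h3 := scaleRoots_aeval_eq_zero (a := (y : ℚ)) (r := (d : ℚ)) (p := (F.map (MvPolynomial.eval x)).map (Int.castRingHom ℚ)) (by
    rw [coe_aeval_eq_eval]; exact h2)
  rw [← h1, coe_aeval_eq_eval] at h3
  have h4 : ((((d * y : ℤ)) : ℤ) : ℚ) = algebraMap ℚ ℚ (d : ℚ) * y := by push_cast; rfl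
  rw [← h4, eval_intCast_map] at h3
  exact (map_eq_zero_iff _ Int.cast_injective).1 h3

lemma num_final (K B : ℝ) (c m : ℕ) (hc : 1 ≤ c) (hK : 0 ≤ K) (hB : 1 ≤ B) :
    K * ((c * ⌊B⌋₊ : ℕ) : ℝ) ^ m * Real.log ((c * ⌊B⌋₊ : ℕ) + 2) ^ 2 ≤
      (K * c ^ m * (Real.log c + 1) ^ 2 + 1) * B ^ m * Real.log (B + 2) ^ 2 := by
  have hb : (⌊B⌋₊ : ℝ) ≤ B := Nat.floor_le (by linarith)
  have hc' : (1 : ℝ) ≤ c := by exact_mod_cast hc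
  have hlc : 0 ≤ Real.log c := Real.log_nonneg hc'
  have hlB : 1 ≤ Real.log (B + 2) := by
    rw [Real.le_log_iff_exp_le (by linarith)]
    have := Real.exp_one_lt_d9
    linarith
  have h0 : (0 : ℝ) ≤ (⌊B⌋₊ : ℝ) := by positivity
  have hl : Real.log ((c * ⌊B⌋₊ : ℕ) + 2) ≤ (Real.log c + 1) * Real.log (B + 2) := by
    calc Real.log ((c * ⌊B⌋₊ : ℕ) + 2) ≤ Real.log (c * (B + 2)) := by
          apply Real.log_le_log (by positivity)
          push_cast
          nlinarith
      _ = Real.log c + Real.log (B + 2) := Real.log_mul (by positivity) (by linarith)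
      _ ≤ _ := by nlinarith
  have hl0 : 0 ≤ Real.log ((c * ⌊B⌋₊ : ℕ) + 2) := by
    apply Real.log_nonneg
    have : (0 : ℝ) ≤ ((c * ⌊B⌋₊ : ℕ) : ℝ) := by positivity
    linarith
  calc _ ≤ K * (c * B) ^ m * ((Real.log c + 1) * Real.log (B + 2)) ^ 2 := by
        push_cast at *
        gcongr
    _ = (K * c ^ m * (Real.log c + 1) ^ 2) * (B ^ m * Real.log (B + 2) ^ 2) := by
        rw [mul_pow, mul_pow]; ring
    _ ≤ _ := by
        have : 0 ≤ B ^ m * Real.log (B + 2) ^ 2 := by positivity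
        nlinarith

lemma exists_clear_mat {n : ℕ} (σ : Matrix (Fin n) (Fin n) ℚ) :
    ∃ N : ℤ, N ≠ 0 ∧ ∃ S : Matrix (Fin n) (Fin n) ℤ, ∀ k j, (S k j : ℚ) = N * σ k j := by
  let N : ℤ := ∏ p : Fin n × Fin n, ((σ p.1 p.2).den : ℤ)
  refine ⟨N, Finset.prod_ne_zero_iff.2 fun p _ => by exact_mod_cast (σ p.1 p.2).den_nz, ?_⟩
  have : ∀ k j, ∃ s : ℤ, (s : ℚ) = N * σ k j := by
    intro k j
    obtain ⟨t, ht⟩ : ((σ k j).den : ℤ) ∣ N :=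
      Finset.dvd_prod_of_mem (fun p : Fin n × Fin n => ((σ p.1 p.2).den : ℤ)) (Finset.mem_univ (k, j))
    refine ⟨(σ k j).num * t, ?_⟩
    rw [ht]
    push_cast
    rw [← Rat.mul_den_eq_num (σ k j)]
    ring
  choose S hS using this
  exact ⟨S, hS⟩

theorem final_m (m : ℕ) (F : Polynomial (MvPolynomial (Fin (m+1)) ℤ)) (hal : IsAllowable F)
    (hns : ¬ IsStronglyAllowable F) :
    ∃ C : ℝ, 0 < C ∧ ∀ B : ℝ, 1 ≤ B →
          (NFB F B : ℝ) ≤ C * B ^ m * Real.log (B + 2) ^ 2 := by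
  classical
  obtain ⟨hirr, hmon, hgen⟩ := hal
  have h1 : ∃ σ : Matrix (Fin (m+1)) (Fin (m+1)) ℚ, IsUnit σ.det ∧ ¬ StronglyGenuineExtOfQ (applyGL σ (toQ F)) := by
    by_contra! h
    exact hns ⟨hirr, hmon, h⟩
  obtain ⟨σ, hσ, h2⟩ := h1
  unfold StronglyGenuineExtOfQ at h2
  push Not at h2
  obtain ⟨M, iF, iA, ⟨e⟩, h3⟩ := h2
  unfold IsStronglyGenuineExt IsGenuineExt at h3
  push Not at h3
  obtain ⟨M', hM', G, hG, ⟨e'⟩, h4⟩ := h3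
  have h5 : ∃ i, degX G i = 0 := by
    by_contra! h
    apply h4
    refine ⟨?_, fun i => Nat.pos_of_ne_zero (h i)⟩
    have h6 := hG.natDegree_pos
    refine h6.trans_le ?_
    rw [toFrac, toFracQ, toQ]
    exact natDegree_map_le.trans natDegree_map_le
  obtain ⟨i, hi⟩ := h5
  obtain ⟨N, hN, S, hS⟩ := exists_clear_mat σ⁻¹
  have hfm : (applyGL σ (toQ F)).Monic := (hmon.map _).map _
  obtain ⟨d, hd, P, hP, K, hK, hb⟩ := wrap_alg m (applyGL σ (toQ F)) hfm (absIrred_gl F hirr σ hσ) i N hN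
    (hgen σ hσ) M e M' hM' G hG e' hi
  let c : ℕ := (∑ k, ∑ j, (S k j).natAbs) + 1
  refine ⟨K * c ^ m * (Real.log c + 1) ^ 2 + 1, by positivity, fun B hB => ?_⟩
  have hfl : 1 ≤ ⌊B⌋₊ := Nat.le_floor (by simpa using hB)
  have hc1 : 1 ≤ c := by simp [c]
  refine le_trans ?_ (num_final K B c m hc1 hK hB)
  refine le_trans ?_ (hb (c * ⌊B⌋₊) (Nat.mul_pos hc1 hfl))
  rw [Nat.cast_le, NFB, ← Set.ncard_coe_finset]
  let W : (Fin (m+1) → ℤ) → Fin (m+1) → ℤ := fun x k => ∑ j, S k j * x j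
  let Z : (Fin (m+1) → ℤ) → Fin (m+1) → ℚ := fun x k => ∑ j, σ⁻¹ k j * x j
  have hW : ∀ x k, (W x k : ℚ) = N * Z x k := by
    intro x k
    simp only [W, Z]
    push_cast
    rw [Finset.mul_sum]
    exact Finset.sum_congr rfl fun j _ => by rw [hS, mul_assoc]
  have hZ : ∀ x : Fin (m+1) → ℤ, ∀ k, (x k : ℚ) = ∑ j, σ k j * Z x j := by
    intro x k
    have h7 : σ.mulVec (σ⁻¹.mulVec (fun j => (x j : ℚ))) = fun j => (x j : ℚ) := by
      rw [Matrix.mulVec_mulVec, Matrix.mul_nonsing_inv _ hσ, Matrix.one_mulVec]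
    exact (congrFun h7 k).symm
  apply Set.ncard_le_ncard_of_injOn (fun x => ((fun j => W x (i.succAbove j)), W x i))
  · rintro x ⟨hx, y, hy⟩
    rw [Finset.mem_coe, Finset.mem_filter, Finset.mem_product]
    have hxb : ∀ j, |x j| ≤ (⌊B⌋₊ : ℤ) := by
      intro j
      have h8 := hx j
      have h9 : ((x j).natAbs : ℝ) ≤ B := by rwa [Nat.cast_natAbs, Int.cast_abs]
      have h10 := Nat.le_floor h9
      rw [Int.abs_eq_natAbs]
      exact_mod_cast h10
    have hWb : ∀ k, |W x k| ≤ ((c * ⌊B⌋₊ : ℕ) : ℤ) := by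
      intro k
      calc |W x k| ≤ ∑ j, |S k j * x j| := Finset.abs_sum_le_sum_abs _ _
        _ ≤ ∑ j, |S k j| * (⌊B⌋₊ : ℤ) := by
            refine Finset.sum_le_sum fun j _ => ?_
            rw [abs_mul]
            exact mul_le_mul_of_nonneg_left (hxb j) (abs_nonneg _)
        _ = (((∑ j, (S k j).natAbs) * ⌊B⌋₊ : ℕ) : ℤ) := by
            rw [← Finset.sum_mul]; push_cast; rfl
        _ ≤ _ := by
            have h11 : ∑ j, (S k j).natAbs ≤ c := by
              have := Finset.single_le_sum (f := fun k => ∑ j, (S k j).natAbs) (fun _ _ => Nat.zero_le _) (Finset.mem_univ k)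
              simp only [c]; omega
            exact_mod_cast Nat.mul_le_mul_right _ h11
    refine ⟨⟨mem_nbox.2 fun j => hWb _, mem_ibox.2 (hWb _)⟩, d * y, ?_⟩
    exact root_transfer m F hmon σ i N d P hP (Z x) (W x) (hW x) x (hZ x) y hy
  · intro x _ x' _ hxx
    rw [Prod.mk.injEq] at hxx
    have hWW : ∀ k, W x k = W x' k := by
      intro k
      rcases Fin.eq_self_or_eq_succAbove i k with rfl | ⟨j, rfl⟩
      · exact hxx.2
      · exact congrFun hxx.1 j
    have hN' : (N : ℚ) ≠ 0 := by exact_mod_cast hN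
    have hZZ : ∀ k, Z x k = Z x' k := by
      intro k
      apply mul_left_cancel₀ hN'
      rw [← hW, ← hW, hWW]
    funext k
    have h12 : (x k : ℚ) = x' k := by
      rw [hZ x k, hZ x' k]
      exact Finset.sum_congr rfl fun j _ => by rw [hZZ]
    exact_mod_cast h12

theorem statement3 (n : ℕ) (hn : 2 ≤ n) :
    ∃ e : ℕ, 1 ≤ e ∧
      ∀ F : Polynomial (MvPolynomial (Fin n) ℤ),
        2 ≤ F.natDegree → IsAllowable F → ¬ IsStronglyAllowable F →
        ∃ C : ℝ, 0 < C ∧ ∀ B : ℝ, 1 ≤ B →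
          (NFB F B : ℝ) ≤ C * B ^ (n - 1) * Real.log (B + 2) ^ e := by
  obtain ⟨m, rfl⟩ : ∃ m, n = m + 1 := ⟨n - 1, by omega⟩
  exact ⟨2, by norm_num, fun F _ hal hns => final_m m F hal hns⟩
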